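/- arXiv:1808.03764 — 6 statements merged into one kernel-verified Lean document; each statement's English description precedes it below -/
import Mathlib

section
/- For every n ≥ 0, the statistic crs is equidistributed over the three avoidance classes S_n(132), S_n(213) and S_n(321): the multisets {crs(σ) : σ ∈ S_n(132)}, {crs(σ) : σ ∈ S_n(213)} and {crs(σ) : σ ∈ S_n(321)} are equal, i.e. Σ_{σ∈S_n(132)} x^{crs(σ)} = Σ_{σ∈S_n(213)} x^{crs(σ)} = Σ_{σ∈S_n(321)} x^{crs(σ)} as polynomials in x. Moreover these are the only coincidences among patterns of length 3: the patterns 123, 231, 312 each form singleton crs-Wilf classes. -/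
open Equiv Finset

/-- Number of crossings of a permutation of `Fin n` (0-indexed version of the
classical definition on `[n] = {1,…,n}`): pairs `(i,j)` with
`i<j<σ(i)<σ(j)` or `σ(i)<σ(j)≤i<j`. -/
def crs {n : ℕ} (σ : Equiv.Perm (Fin n)) : ℕ :=
  (Finset.univ.filter (fun q : Fin n × Fin n =>
    ((q.1 : ℕ) < q.2 ∧ (q.2 : ℕ) < σ q.1 ∧ (σ q.1 : ℕ) < σ q.2) ∨
    ((σ q.1 : ℕ) < σ q.2 ∧ (σ q.2 : ℕ) ≤ q.1 ∧ (q.1 : ℕ) < q.2))).card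

/-- Number of nestings of a permutation of `Fin n`: pairs `(i,j)` with
`i<j<σ(j)<σ(i)` or `σ(j)<σ(i)≤i<j`. -/
def nes {n : ℕ} (σ : Equiv.Perm (Fin n)) : ℕ :=
  (Finset.univ.filter (fun q : Fin n × Fin n =>
    ((q.1 : ℕ) < q.2 ∧ (q.2 : ℕ) < σ q.2 ∧ (σ q.2 : ℕ) < σ q.1) ∨
    ((σ q.2 : ℕ) < σ q.1 ∧ (σ q.1 : ℕ) ≤ q.1 ∧ (q.1 : ℕ) < q.2))).card

/-- Number of fixed points. -/
def fp {n : ℕ} (σ : Equiv.Perm (Fin n)) : ℕ :=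
  (Finset.univ.filter (fun i : Fin n => σ i = i)).card

/-- Number of excedances. -/
def exc {n : ℕ} (σ : Equiv.Perm (Fin n)) : ℕ :=
  (Finset.univ.filter (fun i : Fin n => (i : ℕ) < σ i)).card

/-- Number of inversions. -/
def invStat {n : ℕ} (σ : Equiv.Perm (Fin n)) : ℕ :=
  (Finset.univ.filter (fun q : Fin n × Fin n => q.1 < q.2 ∧ σ q.2 < σ q.1)).card

/-- `σ` contains the pattern `τ`: there is a strictly increasing choice of positions
on which `σ` is order-isomorphic to `τ`. -/
def Contains {n k : ℕ} (σ : Equiv.Perm (Fin n)) (τ : Equiv.Perm (Fin k)) : Prop :=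
  ∃ f : Fin k → Fin n, StrictMono f ∧ ∀ a b : Fin k, σ (f a) < σ (f b) ↔ τ a < τ b

/-- `σ` avoids the pattern `τ`. -/
def Avoids {n k : ℕ} (σ : Equiv.Perm (Fin n)) (τ : Equiv.Perm (Fin k)) : Prop :=
  ¬ Contains σ τ

/-- The pattern 123 (as a permutation of `Fin 3`, 0-indexed). -/
def p123 : Equiv.Perm (Fin 3) := 1
/-- The pattern 132. -/
def p132 : Equiv.Perm (Fin 3) := Equiv.swap 1 2
/-- The pattern 213. -/
def p213 : Equiv.Perm (Fin 3) := Equiv.swap 0 1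
/-- The pattern 321. -/
def p321 : Equiv.Perm (Fin 3) := Equiv.swap 0 2
/-- The pattern 231. -/
def p231 : Equiv.Perm (Fin 3) := Equiv.swap 0 2 * Equiv.swap 0 1
/-- The pattern 312. -/
def p312 : Equiv.Perm (Fin 3) := Equiv.swap 0 2 * Equiv.swap 1 2

open scoped Classical in
/-- The multiset of values of `crs` over the `τ`-avoiding permutations of `Fin n`. -/
noncomputable def crsDist (n : ℕ) {k : ℕ} (τ : Equiv.Perm (Fin k)) : Multiset ℕ :=
  (Finset.univ.filter (fun σ : Equiv.Perm (Fin n) => Avoids σ τ)).val.map crs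

/-!
The patterns 132 and 213 are exchanged by the reflection in the antidiagonal, which preserves
crossings. For 213 and 321 the avoiding permutations grow along the same generating tree: label a
nonempty permutation `σ` with the pair `(a, c)`, where `c = crs σ` and `a` is the last value of `σ`
if `σ` avoids 213, but the complement of the last value if `σ` avoids 321. In both trees a node
labelled `(a, c)` has the children `(a + 1, c)` and `(m, c + m)` for `m ≤ a`.

For 321, the child `(a + 1, c)` inserts the largest value just before the last position, and the
others append a point. For 213, the child `(a + 1, c)` inserts the value `0` at the beginning. For
the other children, remove from `σ` the point with the value `0`, at the position `n - v` say. What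
is left is a skew sum with a second summand of size `v`, so that a point with the value `v` can be
inserted at the beginning instead; then append a point with the value `m`.
-/

/-! ### Inserting a point -/

section Insertion

variable {n : ℕ}

/-- The permutation taking the value `m` at the position `p` and order-isomorphic to `ρ` on the
other positions: a new point is inserted into the permutation matrix of `ρ`. -/
def insertPoint (p m : Fin (n + 1)) (ρ : Perm (Fin n)) : Perm (Fin (n + 1)) :=
  (finSuccEquiv' p).trans (ρ.optionCongr.trans (finSuccEquiv' m).symm)

@[simp] lemma insertPoint_apply_self (p m : Fin (n + 1)) (ρ : Perm (Fin n)) :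
    insertPoint p m ρ p = m := by
  simp [insertPoint]

@[simp] lemma insertPoint_succAbove (p m : Fin (n + 1)) (ρ : Perm (Fin n)) (i : Fin n) :
    insertPoint p m ρ (p.succAbove i) = m.succAbove (ρ i) := by
  simp [insertPoint]

lemma insertPoint_inv (p m : Fin (n + 1)) (ρ : Perm (Fin n)) :
    (insertPoint p m ρ)⁻¹ = insertPoint m p ρ⁻¹ := rfl

lemma insertPoint_bijective (p : Fin (n + 1)) :
    Function.Bijective fun x : Fin (n + 1) × Perm (Fin n) => insertPoint p x.1 x.2 := by
  rw [Fintype.bijective_iff_injective_and_card]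
  refine ⟨?_, by simp [Fintype.card_perm, Nat.factorial_succ]⟩
  rintro ⟨m, ρ⟩ ⟨m', ρ'⟩ h
  obtain rfl : m = m' := by simpa using congrArg (· p) h
  have hρ : ρ = ρ' := Equiv.ext fun i => by simpa using congrArg (· (p.succAbove i)) h
  rw [hρ]

/-- A permutation is determined by its value at `p` and the order type of the remaining values. -/
noncomputable def insertPointEquiv (p : Fin (n + 1)) :
    Fin (n + 1) × Perm (Fin n) ≃ Perm (Fin (n + 1)) :=
  Equiv.ofBijective _ (insertPoint_bijective p)

lemma sum_perm_eq_sum_insertPoint {M : Type*} [AddCommMonoid M] (p : Fin (n + 1))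
    (F : Perm (Fin (n + 1)) → M) : ∑ σ, F σ = ∑ m, ∑ ρ, F (insertPoint p m ρ) := by
  rw [← (insertPointEquiv p).sum_comp, Fintype.sum_prod_type]
  rfl

lemma sum_perm_apply_eq {M : Type*} [AddCommMonoid M] (p m : Fin (n + 1))
    (F : Perm (Fin (n + 1)) → M) : ∑ σ with σ p = m, F σ = ∑ ρ, F (insertPoint p m ρ) := by
  rw [Finset.sum_filter, sum_perm_eq_sum_insertPoint p, Finset.sum_eq_single m]
  · simp
  · intro m' _ hm'
    simp [hm']
  · simp

lemma val_succAbove (p : Fin (n + 1)) (i : Fin n) :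
    (p.succAbove i : ℕ) = if (i : ℕ) < p then (i : ℕ) else i + 1 := by
  simp only [Fin.succAbove, Fin.lt_def, Fin.val_castSucc]
  split_ifs <;> simp

end Insertion

/-! ### Crossings -/

section Crossings

/-- The points `(i, a)` and `(j, b)` cross, `(i, a)` being the left one: the relation counted by
`crs`, for points given by natural coordinates. -/
abbrev IsCrossing (i j a b : ℕ) : Prop :=
  (i < j ∧ j < a ∧ a < b) ∨ (a < b ∧ b ≤ i ∧ i < j)

/-- The number of crossings in the family of points `(P i, V i)`. Unlike for `crs`, the
coordinates need not fill an interval, so that points can be removed or translated. -/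
def crossingCount {ι : Type*} [Fintype ι] (P V : ι → ℕ) : ℕ :=
  #{q : ι × ι | IsCrossing (P q.1) (P q.2) (V q.1) (V q.2)}

variable {n : ℕ}

lemma crs_eq_crossingCount (σ : Perm (Fin n)) :
    crs σ = crossingCount Fin.val (fun i => (σ i : ℕ)) := rfl

lemma crossingCount_congr {ι : Type*} [Fintype ι] {P V P' V' : ι → ℕ}
    (h : ∀ i j, IsCrossing (P i) (P j) (V i) (V j) ↔ IsCrossing (P' i) (P' j) (V' i) (V' j)) :
    crossingCount P V = crossingCount P' V' := by
  simp only [crossingCount, h]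

lemma crossingCount_eq_add_card {ι : Type*} [Fintype ι] {P V P' V' : ι → ℕ}
    {C : ι → Prop} [DecidablePred C] (e : ι → ι × ι) (he : Function.Injective e)
    (h : ∀ i j, IsCrossing (P i) (P j) (V i) (V j) ↔
      IsCrossing (P' i) (P' j) (V' i) (V' j) ∨ ∃ k, C k ∧ e k = (i, j))
    (hC : ∀ k, C k → ¬ IsCrossing (P' (e k).1) (P' (e k).2) (V' (e k).1) (V' (e k).2)) :
    crossingCount P V = crossingCount P' V' + #{k | C k} := by
  classical
  have hunion : ({q | IsCrossing (P q.1) (P q.2) (V q.1) (V q.2)} : Finset (ι × ι)) =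
      ({q | IsCrossing (P' q.1) (P' q.2) (V' q.1) (V' q.2)} : Finset (ι × ι)) ∪
        image e {k | C k} := by
    ext ⟨i, j⟩
    simp [h]
  rw [crossingCount, crossingCount, hunion, Finset.card_union_of_disjoint,
    Finset.card_image_of_injective _ he]
  rw [Finset.disjoint_right]
  simpa using hC

lemma crossingCount_succAbove (P V : Fin (n + 1) → ℕ) (p : Fin (n + 1)) :
    crossingCount P V = crossingCount (fun i => P (p.succAbove i)) (fun i => V (p.succAbove i)) +
      #{j | IsCrossing (P p) (P (p.succAbove j)) (V p) (V (p.succAbove j)) ∨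
        IsCrossing (P (p.succAbove j)) (P p) (V (p.succAbove j)) (V p)} := by
  have hp : ¬ IsCrossing (P p) (P p) (V p) (V p) := by omega
  have hor (j : Fin n) : (if IsCrossing (P p) (P (p.succAbove j)) (V p) (V (p.succAbove j)) ∨
        IsCrossing (P (p.succAbove j)) (P p) (V (p.succAbove j)) (V p) then 1 else 0) =
      (if IsCrossing (P p) (P (p.succAbove j)) (V p) (V (p.succAbove j)) then 1 else 0) +
        if IsCrossing (P (p.succAbove j)) (P p) (V (p.succAbove j)) (V p) then 1 else 0 := by
    split_ifs <;> omega
  simp only [crossingCount, Finset.card_filter, Fintype.sum_prod_type,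
    Fin.sum_univ_succAbove _ p, if_neg hp, hor, Finset.sum_add_distrib]
  ring

lemma crs_insertPoint (p m : Fin (n + 1)) (ρ : Perm (Fin n)) :
    crs (insertPoint p m ρ) =
      crossingCount (fun i => (p.succAbove i : ℕ)) (fun i => (m.succAbove (ρ i) : ℕ)) +
      #{j | IsCrossing p (p.succAbove j) m (m.succAbove (ρ j)) ∨
        IsCrossing (p.succAbove j) p (m.succAbove (ρ j)) m} := by
  rw [crs_eq_crossingCount, crossingCount_succAbove _ _ p]
  simp

lemma crs_insertPoint_zero_zero (τ : Perm (Fin n)) : crs (insertPoint 0 0 τ) = crs τ := by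
  rw [crs_insertPoint, crs_eq_crossingCount τ, Finset.card_filter_eq_zero_iff.2 (by simp), add_zero]
  exact crossingCount_congr fun i j => by
    simp only [Fin.succAbove_zero, Fin.val_succ]
    omega

lemma crs_insertPoint_penultimate_last (τ : Perm (Fin (n + 1))) :
    crs (insertPoint (Fin.last n).castSucc (Fin.last (n + 1)) τ) = crs τ := by
  rw [crs_insertPoint, crs_eq_crossingCount τ, Finset.card_filter_eq_zero_iff.2, add_zero]
  · refine crossingCount_congr fun i j => ?_
    simp only [val_succAbove, Fin.val_last, Fin.val_castSucc]
    grind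
  · intro j _
    simp only [val_succAbove, Fin.val_last, Fin.val_castSucc]
    grind

lemma crs_insertPoint_last (m : Fin (n + 1)) (ρ : Perm (Fin n)) :
    crs (insertPoint (Fin.last n) m ρ) =
      crossingCount Fin.val (fun i => (m.succAbove (ρ i) : ℕ)) +
        #{i | (ρ i : ℕ) < m ∧ (m : ℕ) ≤ i} := by
  rw [crs_insertPoint]
  simp only [Fin.succAbove_last, Fin.val_castSucc, Fin.val_last, val_succAbove]
  congr 2
  ext i
  simp only [Finset.mem_filter_univ]
  grind

end Crossings

section LastPoint

variable {n : ℕ}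

lemma card_apply_lt (σ : Perm (Fin n)) (m : ℕ) : #{i | (σ i : ℕ) < m} = min n m := by
  rw [Finset.card_filter, Equiv.sum_comp σ fun i => if (i : ℕ) < m then 1 else 0,
    ← Finset.card_filter, Fin.card_filter_val_lt]

lemma card_le_apply (σ : Perm (Fin n)) (m : ℕ) : #{i | m ≤ (σ i : ℕ)} = n - m := by
  have h := Finset.card_filter_add_card_filter_not (s := univ) fun i => (σ i : ℕ) < m
  simp only [not_lt, card_apply_lt, Finset.card_univ, Fintype.card_fin] at h
  omega

/-- The number of crossings relative to the diagonal moved down by one. -/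
def crsShift (σ : Perm (Fin n)) : ℕ :=
  crossingCount Fin.val fun i => (σ i + 1 : ℕ)

-- The values `ρ i` and `ρ i + 1` make a difference only for the pairs of points `(i, ρ i)`
-- and `(j, ρ j)` with `ρ j = i` below height `m`: they cross only before the shift.
lemma crossingCount_succAbove_of_small_below (ρ : Perm (Fin n)) (m : Fin (n + 1))
    (hinc : ∀ i j, i < j → ρ j < ρ i → (m : ℕ) ≤ ρ i)
    (hbelow : ∀ i, (ρ i : ℕ) < m → ρ i < i) :
    crossingCount Fin.val (fun i => (m.succAbove (ρ i) : ℕ)) =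
      crsShift ρ + #{i | (ρ i : ℕ) < m ∧ (i : ℕ) < m} := by
  refine crossingCount_eq_add_card (fun i => (i, ρ.symm i))
    (fun i j h => congrArg Prod.fst h) (fun i j => ?_) fun i _ => ?_
  · have hij : (∃ k : Fin n, ((ρ k : ℕ) < m ∧ (k : ℕ) < m) ∧ (k, ρ.symm k) = (i, j)) ↔
        ((ρ i : ℕ) < m ∧ (i : ℕ) < m) ∧ i = ρ j := by
      grind [Equiv.symm_apply_eq]
    have hinj : ρ i = ρ j → i = j := fun h => ρ.injective h
    have := hinc i j
    have := hinc j i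
    have := hbelow i
    have := hbelow j
    rw [hij]
    simp only [val_succAbove]
    grind
  · simp only [Equiv.apply_symm_apply]
    omega

lemma crs_insertPoint_last_of_small_below (ρ : Perm (Fin n)) (m : Fin (n + 1))
    (hinc : ∀ i j, i < j → ρ j < ρ i → (m : ℕ) ≤ ρ i)
    (hbelow : ∀ i, (ρ i : ℕ) < m → ρ i < i) :
    crs (insertPoint (Fin.last n) m ρ) = crsShift ρ + m := by
  have hcard := Finset.card_filter_add_card_filter_not (s := {i | (ρ i : ℕ) < m})
    fun i => (i : ℕ) < m
  simp only [Finset.filter_filter, not_lt, card_apply_lt] at hcard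
  rw [crs_insertPoint_last, crossingCount_succAbove_of_small_below ρ m hinc hbelow]
  omega

-- Moving the values from `k` on up by one creates exactly the crossings of the points `(i, τ i)`
-- and `(j, τ j)` with `τ i = j` and both heights at least `k`.
lemma crossingCount_succAbove_of_large_above (τ : Perm (Fin n)) (k : Fin (n + 1))
    (hinc : ∀ i j, i < j → τ j < τ i → (τ j : ℕ) < k)
    (habove : ∀ i, (k : ℕ) ≤ τ i → i < τ i) :
    crossingCount Fin.val (fun i => (k.succAbove (τ i) : ℕ)) =
      crs τ + #{j : Fin n | (k : ℕ) ≤ j ∧ (k : ℕ) ≤ τ j} := by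
  rw [crs_eq_crossingCount]
  refine crossingCount_eq_add_card (fun j => (τ.symm j, j))
    (fun i j h => congrArg Prod.snd h) (fun i j => ?_) fun j _ => ?_
  · have hij : (∃ l : Fin n, ((k : ℕ) ≤ l ∧ (k : ℕ) ≤ τ l) ∧ (τ.symm l, l) = (i, j)) ↔
        ((k : ℕ) ≤ j ∧ (k : ℕ) ≤ τ j) ∧ j = τ i := by
      grind [Equiv.symm_apply_eq]
    have hinj : τ i = τ j → i = j := fun h => τ.injective h
    have := hinc i j
    have := hinc j i
    have := habove i
    have := habove j
    rw [hij]
    clear hij hinc habove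
    simp only [val_succAbove]
    grind
  · simp only [Equiv.apply_symm_apply]
    omega

lemma crs_insertPoint_last_of_large_above (τ : Perm (Fin n)) (k : Fin (n + 1))
    (hinc : ∀ i j, i < j → τ j < τ i → (τ j : ℕ) < k)
    (habove : ∀ i, (k : ℕ) ≤ τ i → i < τ i) :
    crs (insertPoint (Fin.last n) k τ) = crs τ + k.rev := by
  have hcard := Finset.card_filter_add_card_filter_not (s := {i : Fin n | (k : ℕ) ≤ i})
    fun i => (k : ℕ) ≤ τ i
  have hk : #{i : Fin n | (k : ℕ) ≤ i} = n - k := card_le_apply 1 k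
  simp only [Finset.filter_filter, not_le, hk] at hcard
  rw [crs_insertPoint_last, crossingCount_succAbove_of_large_above τ k hinc habove, Fin.val_rev]
  simp only [and_comm (a := (τ _ : ℕ) < k)]
  omega

end LastPoint

/-! ### Pattern avoidance -/

section Avoidance

lemma avoids_of_lt {n k : ℕ} (h : n < k) (σ : Perm (Fin n)) (τ : Perm (Fin k)) : Avoids σ τ := by
  rintro ⟨f, hf, -⟩
  exact absurd (Fintype.card_le_of_injective f hf.injective) (by simpa using h)

variable {n : ℕ}

lemma avoids_iff (σ : Perm (Fin n)) (τ : Perm (Fin 3)) :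
    Avoids σ τ ↔ ∀ i j k, i < j → j < k → ¬ ((σ i < σ j ↔ τ 0 < τ 1) ∧
      (σ i < σ k ↔ τ 0 < τ 2) ∧ (σ j < σ k ↔ τ 1 < τ 2)) := by
  refine ⟨fun h i j k hij hjk ⟨h01, h02, h12⟩ => h ⟨![i, j, k], ?_, ?_⟩, ?_⟩
  · simp [Fin.strictMono_iff_lt_succ, Fin.forall_fin_succ, hij, hjk]
  · have hσ := σ.injective.ne hij.ne
    have hσ' := σ.injective.ne hjk.ne
    have hσ'' := σ.injective.ne (hij.trans hjk).ne
    have hτ : τ 0 ≠ τ 1 ∧ τ 0 ≠ τ 2 ∧ τ 1 ≠ τ 2 := by simp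
    intro a b
    fin_cases a <;> fin_cases b <;> simp [h01, h02, h12] <;> omega
  · rintro h ⟨f, hf, hocc⟩
    exact h (f 0) (f 1) (f 2) (hf (by decide)) (hf (by decide)) ⟨hocc 0 1, hocc 0 2, hocc 1 2⟩

lemma avoids_p213_iff (σ : Perm (Fin n)) :
    Avoids σ p213 ↔ ∀ i j k, i < j → j < k → ¬ (σ j < σ i ∧ σ i < σ k) := by
  have h01 : ¬ p213 0 < p213 1 := by decide
  have h02 : p213 0 < p213 2 := by decide
  have h12 : p213 1 < p213 2 := by decide
  rw [avoids_iff]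
  refine forall₅_congr fun i j k hij _ => not_congr ?_
  have hσ := σ.injective.ne hij.ne
  simp only [h01, h02, h12, iff_true, iff_false]
  omega

lemma avoids_p321_iff (σ : Perm (Fin n)) :
    Avoids σ p321 ↔ ∀ i j k, i < j → j < k → ¬ (σ k < σ j ∧ σ j < σ i) := by
  have h01 : ¬ p321 0 < p321 1 := by decide
  have h02 : ¬ p321 0 < p321 2 := by decide
  have h12 : ¬ p321 1 < p321 2 := by decide
  rw [avoids_iff]
  refine forall₅_congr fun i j k hij hjk => not_congr ?_
  have hσ := σ.injective.ne hij.ne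
  have hσ' := σ.injective.ne hjk.ne
  simp only [h01, h02, h12, iff_false]
  omega

lemma lt_succAbove_iff_val_le (p : Fin (n + 1)) (i : Fin n) :
    p < p.succAbove i ↔ (p : ℕ) ≤ i := by
  rw [Fin.lt_succAbove_iff_le_castSucc, Fin.le_def, Fin.val_castSucc]

lemma succAbove_lt_iff_val_lt (p : Fin (n + 1)) (i : Fin n) :
    p.succAbove i < p ↔ (i : ℕ) < p := by
  rw [Fin.succAbove_lt_iff_castSucc_lt, Fin.lt_def, Fin.val_castSucc]

lemma avoids_p213_insertPoint (p m : Fin (n + 1)) (ρ : Perm (Fin n)) :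
    Avoids (insertPoint p m ρ) p213 ↔ Avoids ρ p213 ∧
      (∀ i j : Fin n, (p : ℕ) ≤ i → i < j → (ρ i : ℕ) < m → (ρ j : ℕ) < m) ∧
      (∀ i j : Fin n, (i : ℕ) < p → (p : ℕ) ≤ j → (m : ℕ) ≤ ρ i → ρ j ≤ ρ i) ∧
      ∀ i j : Fin n, i < j → (j : ℕ) < p → ρ j < ρ i → (m : ℕ) ≤ ρ i := by
  simp only [avoids_p213_iff, Fin.forall_iff_succAbove p, insertPoint_apply_self,
    insertPoint_succAbove, Fin.succAbove_lt_succAbove_iff, lt_succAbove_iff_val_le,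
    succAbove_lt_iff_val_lt]
  simp only [lt_self_iff_false, and_self, not_false_eq_true, implies_true, false_and, and_false,
    not_and, not_le, true_and, not_lt, imp_self, forall_and]
  tauto

lemma avoids_p321_insertPoint (p m : Fin (n + 1)) (ρ : Perm (Fin n)) :
    Avoids (insertPoint p m ρ) p321 ↔ Avoids ρ p321 ∧
      (∀ i j : Fin n, (p : ℕ) ≤ i → i < j → ρ j < ρ i → (m : ℕ) ≤ ρ i) ∧
      (∀ i j : Fin n, (i : ℕ) < p → (p : ℕ) ≤ j → (ρ j : ℕ) < m → (ρ i : ℕ) < m) ∧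
      ∀ i j : Fin n, i < j → (j : ℕ) < p → (m : ℕ) ≤ ρ j → ρ i ≤ ρ j := by
  simp only [avoids_p321_iff, Fin.forall_iff_succAbove p, insertPoint_apply_self,
    insertPoint_succAbove, Fin.succAbove_lt_succAbove_iff, lt_succAbove_iff_val_le,
    succAbove_lt_iff_val_lt]
  simp only [lt_self_iff_false, and_self, not_false_eq_true, implies_true, false_and, and_false,
    not_and, not_le, true_and, not_lt, imp_self, forall_and]
  tauto

lemma avoids_p213_insertPoint_zero_zero (τ : Perm (Fin n)) :
    Avoids (insertPoint 0 0 τ) p213 ↔ Avoids τ p213 := by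
  simp [avoids_p213_insertPoint]

lemma avoids_p321_insertPoint_penultimate_last (τ : Perm (Fin (n + 1))) :
    Avoids (insertPoint (Fin.last n).castSucc (Fin.last (n + 1)) τ) p321 ↔ Avoids τ p321 := by
  rw [avoids_p321_insertPoint, and_iff_left]
  simp only [Fin.val_castSucc, Fin.val_last]
  refine ⟨fun i j _ _ _ => ?_, fun i _ _ _ _ => ?_, fun i j _ _ _ => ?_⟩ <;> omega

lemma avoids_p213_insertPoint_last (m : Fin (n + 1)) (ρ : Perm (Fin n)) :
    Avoids (insertPoint (Fin.last n) m ρ) p213 ↔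
      Avoids ρ p213 ∧ ∀ i j, i < j → ρ j < ρ i → (m : ℕ) ≤ ρ i := by
  simp [avoids_p213_insertPoint]

lemma avoids_p321_insertPoint_last (k : Fin (n + 1)) (τ : Perm (Fin n)) :
    Avoids (insertPoint (Fin.last n) k τ) p321 ↔
      Avoids τ p321 ∧ ∀ i j, i < j → τ j < τ i → (τ j : ℕ) < k := by
  have hcontra (i j : Fin n) : ((k : ℕ) ≤ τ j → τ i ≤ τ j) ↔ (τ j < τ i → (τ j : ℕ) < k) := by
    omega
  simp [avoids_p321_insertPoint, hcontra]

lemma avoids_p213_insertPoint_last_iff_le (m : Fin (n + 2)) (ρ : Perm (Fin (n + 1))) :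
    Avoids (insertPoint (Fin.last (n + 1)) m ρ) p213 ↔
      Avoids ρ p213 ∧ (m : ℕ) ≤ ρ (Fin.last n) + 1 := by
  rw [avoids_p213_insertPoint_last]
  refine and_congr_right fun h => ⟨fun hinc => ?_, fun hm i j hij hji => ?_⟩
  · by_contra! hlt
    obtain ⟨i, hi⟩ := ρ.surjective ⟨ρ (Fin.last n) + 1, by omega⟩
    have hne : i ≠ Fin.last n := by
      rintro rfl
      simp [Fin.ext_iff] at hi
    have := hinc i _ (Fin.lt_last_iff_ne_last.2 hne) (by simp [hi, Fin.lt_def])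
    simp only [hi] at this
    omega
  · have hlast : ρ (Fin.last n) ≤ ρ i := by
      obtain rfl | hj := eq_or_ne j (Fin.last n)
      · exact hji.le
      · exact not_lt.1 fun hi =>
          (avoids_p213_iff ρ).1 h i j _ hij (Fin.lt_last_iff_ne_last.2 hj) ⟨hji, hi⟩
    have hne : ρ i ≠ ρ (Fin.last n) := ρ.injective.ne (hij.trans_le (Fin.le_last j)).ne
    omega

lemma insertPoint_last_apply_castSucc (m : Fin (n + 1)) (ρ : Perm (Fin n)) (i : Fin n) :
    insertPoint (Fin.last n) m ρ i.castSucc = m.succAbove (ρ i) := by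
  rw [← Fin.succAbove_last_apply, insertPoint_succAbove]

lemma avoids_p321_insertPoint_last_and_ne_iff (k : Fin (n + 2)) (τ : Perm (Fin (n + 1))) :
    Avoids (insertPoint (Fin.last (n + 1)) k τ) p321 ∧
        insertPoint (Fin.last (n + 1)) k τ (Fin.last n).castSucc ≠ Fin.last (n + 1) ↔
      Avoids τ p321 ∧ (τ (Fin.last n) : ℕ) < k := by
  rw [avoids_p321_insertPoint_last, and_assoc, insertPoint_last_apply_castSucc, Ne, Fin.ext_iff,
    val_succAbove, Fin.val_last]
  refine and_congr_right fun h => ⟨fun ⟨hinc, hne⟩ => ?_, fun hlt => ⟨fun i j hij hji => ?_, ?_⟩⟩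
  · by_contra! hle
    rw [if_neg (by omega)] at hne
    obtain ⟨i, hi⟩ := τ.surjective (Fin.last n)
    have hi' : i ≠ Fin.last n := by
      rintro rfl
      simp [hi] at hne
    have := hinc i _ (Fin.lt_last_iff_ne_last.2 hi') (by rw [hi, Fin.lt_def, Fin.val_last]; omega)
    omega
  · obtain rfl | hj := eq_or_ne j (Fin.last n)
    · exact hlt
    · have := (avoids_p321_iff τ).1 h i j _ hij (Fin.lt_last_iff_ne_last.2 hj)
      omega
  · rw [if_pos hlt]
    omega

lemma apply_lt_self_of_small_increasing {ρ : Perm (Fin (n + 1))} {m : ℕ}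
    (hinc : ∀ i j, i < j → ρ j < ρ i → m ≤ ρ i) (hzero : m ≤ ρ 0)
    (i : Fin (n + 1)) (hi : (ρ i : ℕ) < m) : ρ i < i := by
  have hmaps : Set.MapsTo ρ.symm (Finset.Iic (ρ i)) (Finset.Ioc 0 i) := by
    intro x hx
    obtain ⟨j, rfl⟩ := ρ.surjective x
    simp only [Finset.coe_Iic, Set.mem_Iic, Finset.coe_Ioc, symm_apply_apply, Set.mem_Ioc,
      Fin.pos_iff_ne_zero] at hx ⊢
    refine ⟨?_, not_lt.1 fun hij => ?_⟩
    · rintro rfl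
      omega
    · have := hinc i j hij (hx.lt_of_ne (ρ.injective.ne hij.ne'))
      omega
  have hcard := Finset.card_le_card_of_injOn _ hmaps ρ.symm.injective.injOn
  rw [Fin.card_Iic, Fin.card_Ioc, Fin.val_zero] at hcard
  omega

lemma self_lt_apply_of_large_increasing {τ : Perm (Fin (n + 1))} {k : ℕ}
    (hinc : ∀ i j, i < j → τ j < τ i → (τ j : ℕ) < k) (hlast : (τ (Fin.last n) : ℕ) < k)
    (i : Fin (n + 1)) (hi : k ≤ τ i) : i < τ i := by
  have hmaps : Set.MapsTo τ.symm (Finset.Ici (τ i)) (Finset.Ico i (Fin.last n)) := by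
    intro x hx
    obtain ⟨j, rfl⟩ := τ.surjective x
    simp only [Finset.coe_Ici, Set.mem_Ici, Finset.coe_Ico, symm_apply_apply, Set.mem_Ico,
      Fin.lt_last_iff_ne_last] at hx ⊢
    refine ⟨not_lt.1 fun hji => ?_, ?_⟩
    · have := hinc j i hji (hx.lt_of_ne (τ.injective.ne hji.ne'))
      omega
    · rintro rfl
      omega
  have hcard := Finset.card_le_card_of_injOn _ hmaps τ.symm.injective.injOn
  rw [Fin.card_Ici, Fin.card_Ico, Fin.val_last] at hcard
  omega

end Avoidance

/-! ### Skew sums -/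

section SkewSum

variable {n : ℕ}

lemma eq_of_isLowerSet_of_card_eq {α : Type*} [LinearOrder α] {s t : Finset α}
    (hs : IsLowerSet (s : Set α)) (ht : IsLowerSet (t : Set α)) (h : #s = #t) : s = t := by
  obtain hst | hts := hs.total ht
  · exact Finset.eq_of_subset_of_card_le (Finset.coe_subset.1 hst) h.ge
  · exact (Finset.eq_of_subset_of_card_le (Finset.coe_subset.1 hts) h.le).symm

/-- `ξ` is a skew sum whose second summand has size `v`: its `n - v` largest values come first,
followed by its `v` smallest ones. -/
def IsSkewSumAt (ξ : Perm (Fin n)) (v : Fin (n + 1)) : Prop :=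
  ∀ i, (v : ℕ) ≤ ξ i ↔ (i : ℕ) < v.rev

lemma isSkewSumAt_iff_forall_val_lt (ξ : Perm (Fin n)) (v : Fin (n + 1)) :
    IsSkewSumAt ξ v ↔ ∀ i j, i < j → (ξ i : ℕ) < v → (ξ j : ℕ) < v := by
  refine ⟨fun h i j hij => ?_, fun h => ?_⟩
  · have := h i
    have := h j
    omega
  · have heq : ({i | (v : ℕ) ≤ ξ i} : Finset (Fin n)) =
        ({i | (i : ℕ) < v.rev} : Finset (Fin n)) := by
      refine eq_of_isLowerSet_of_card_eq (fun j i hij => ?_) (fun j i hij => ?_) ?_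
      · have := h i j
        grind
      · grind
      · rw [card_le_apply, Fin.card_filter_val_lt, Fin.val_rev]
        omega
    simpa [Finset.ext_iff, IsSkewSumAt] using heq

lemma isSkewSumAt_iff_forall_apply_le (ξ : Perm (Fin n)) (v : Fin (n + 1)) :
    IsSkewSumAt ξ v ↔ ∀ i j : Fin n, (i : ℕ) < v.rev → (v.rev : ℕ) ≤ j → ξ j ≤ ξ i := by
  refine ⟨fun h i j => ?_, fun h i => ?_⟩
  · have := h i
    have := h j
    omega
  · have heq : ({x | (v.rev : ℕ) ≤ ξ.symm x} : Finset (Fin n)) =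
        ({x | (x : ℕ) < v} : Finset (Fin n)) := by
      refine eq_of_isLowerSet_of_card_eq (fun y x hxy => ?_) (fun y x hxy => ?_) ?_
      · have := h (ξ.symm x) (ξ.symm y)
        grind
      · grind
      · rw [card_le_apply, Fin.card_filter_val_lt, Fin.val_rev]
        omega
    have := Finset.ext_iff.1 heq (ξ i)
    simp only [Finset.mem_filter_univ, symm_apply_apply] at this
    omega

lemma avoids_p213_insertPoint_zero (v : Fin (n + 1)) (ξ : Perm (Fin n)) :
    Avoids (insertPoint 0 v ξ) p213 ↔ Avoids ξ p213 ∧ IsSkewSumAt ξ v := by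
  simp [avoids_p213_insertPoint, isSkewSumAt_iff_forall_val_lt]

lemma avoids_p213_insertPoint_rev_zero (v : Fin (n + 1)) (ξ : Perm (Fin n)) :
    Avoids (insertPoint v.rev 0 ξ) p213 ↔ Avoids ξ p213 ∧ IsSkewSumAt ξ v := by
  simp [avoids_p213_insertPoint, isSkewSumAt_iff_forall_apply_le]

-- From right to left, the block of the large values of `ξ` is translated diagonally and the block
-- of the small values stays where it is, without crossings between the blocks; each of the two
-- inserted points crosses `min v (n - v)` others.
lemma crsShift_insertPoint_zero {v : Fin (n + 1)} {ξ : Perm (Fin n)} (h : IsSkewSumAt ξ v) :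
    crsShift (insertPoint 0 v ξ) = crs (insertPoint v.rev 0 ξ) := by
  have := v.isLt
  rw [crs_insertPoint, crsShift, crossingCount_succAbove _ _ 0]
  simp only [insertPoint_apply_self, insertPoint_succAbove]
  congr 1
  · refine crossingCount_congr fun i j => ?_
    have hi := h i
    have hj := h j
    simp only [Fin.succAbove_zero, Fin.val_succ, val_succAbove, Fin.val_rev] at hi hj ⊢
    grind
  · refine (Finset.card_equiv ξ fun j => ?_).symm
    have hj := h j
    have hξj := h (ξ j)
    simp only [Finset.mem_filter_univ, Fin.succAbove_zero, Fin.val_succ, val_succAbove,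
      Fin.val_zero, Fin.val_rev] at hj hξj ⊢
    grind

end SkewSum

/-! ### The common generating tree -/

section GeneratingTree

variable {n : ℕ} {M : Type*} [AddCommMonoid M]

lemma crs_insertPoint_last_of_avoids_p321 {k : Fin (n + 2)} {τ : Perm (Fin (n + 1))}
    (h : Avoids τ p321 ∧ (τ (Fin.last n) : ℕ) < k) :
    crs (insertPoint (Fin.last (n + 1)) k τ) = crs τ + k.rev := by
  have hav := ((avoids_p321_insertPoint_last_and_ne_iff k τ).2 h).1
  have hinc := ((avoids_p321_insertPoint_last k τ).1 hav).2
  exact crs_insertPoint_last_of_large_above τ k hinc (self_lt_apply_of_large_increasing hinc h.2)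

lemma insertPoint_last_apply_zero (m : Fin (n + 2)) (ρ : Perm (Fin (n + 1))) :
    insertPoint (Fin.last (n + 1)) m ρ 0 = m.succAbove (ρ 0) := by
  rw [← Fin.castSucc_zero, insertPoint_last_apply_castSucc]

lemma crs_insertPoint_last_of_avoids_p213 {m : Fin (n + 2)} {ρ : Perm (Fin (n + 1))}
    (h : Avoids (insertPoint (Fin.last (n + 1)) m ρ) p213)
    (h0 : insertPoint (Fin.last (n + 1)) m ρ 0 ≠ 0) :
    crs (insertPoint (Fin.last (n + 1)) m ρ) = crsShift ρ + m := by
  have hinc := ((avoids_p213_insertPoint_last m ρ).1 h).2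
  refine crs_insertPoint_last_of_small_below ρ m hinc (apply_lt_self_of_small_increasing hinc ?_)
  by_contra! hlt
  have hρ : ρ 0 ≠ 0 := by
    rw [insertPoint_last_apply_zero, Ne, Fin.ext_iff, val_succAbove, if_pos hlt] at h0
    exact fun h => h0 (by simp [h])
  have hsymm : ρ.symm 0 ≠ 0 := fun h => hρ ((ρ.symm_apply_eq.1 h).symm)
  have := hinc 0 (ρ.symm 0) (Fin.pos_iff_ne_zero.2 hsymm)
    (by simpa using Fin.pos_iff_ne_zero.2 hρ)
  omega

lemma insertPoint_rev_zero_apply_last {v : Fin (n + 1)} {ξ : Perm (Fin n)} (h : IsSkewSumAt ξ v)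
    (hv : v ≠ 0) :
    (insertPoint v.rev 0 ξ (Fin.last n) : ℕ) = insertPoint 0 v ξ (Fin.last n) + 1 := by
  obtain _ | n := n
  · exact absurd (Fin.ext (by omega)) hv
  have hlast : v.rev.succAbove (Fin.last n) = Fin.last (n + 1) :=
    Fin.succAbove_ne_last_last (by simpa [Fin.rev_eq_iff] using hv)
  have hzero : (0 : Fin (n + 2)).succAbove (Fin.last n) = Fin.last (n + 1) := by simp
  have hlt : (ξ (Fin.last n) : ℕ) < v := by
    have hlast := h (Fin.last n)
    have hv := Fin.val_ne_zero_iff.2 hv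
    rw [Fin.val_rev, Fin.val_last] at hlast
    omega
  rw [← hlast, insertPoint_succAbove, hlast, ← hzero, insertPoint_succAbove, val_succAbove,
    val_succAbove, if_pos hlt, if_neg (by simp)]

lemma avoids_p213_insertPoint_last_insertPoint_zero_iff (m : Fin (n + 2)) (v : Fin (n + 1))
    (ξ : Perm (Fin n)) :
    Avoids (insertPoint (Fin.last (n + 1)) m (insertPoint 0 v ξ)) p213 ∧
        insertPoint (Fin.last (n + 1)) m (insertPoint 0 v ξ) 0 ≠ 0 ↔
      Avoids (insertPoint v.rev 0 ξ) p213 ∧ (m : ℕ) ≤ insertPoint v.rev 0 ξ (Fin.last n) := by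
  rw [insertPoint_last_apply_zero, insertPoint_apply_self, avoids_p213_insertPoint_last_iff_le,
    avoids_p213_insertPoint_zero, avoids_p213_insertPoint_rev_zero, and_assoc]
  refine and_congr_right fun ⟨_, hskew⟩ => ?_
  obtain rfl | hv := eq_or_ne v 0
  · rw [Fin.rev_zero, insertPoint_apply_self, Ne, Fin.ext_iff, val_succAbove]
    simp only [Fin.val_zero]
    grind
  · rw [insertPoint_rev_zero_apply_last hskew hv, and_iff_left]
    simp only [Ne, Fin.ext_iff, val_succAbove, Fin.val_zero] at hv ⊢
    grind

lemma sum_perm_eq_sum_insertPoint_position (m : Fin (n + 1))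
    (F : Perm (Fin (n + 1)) → M) : ∑ σ, F σ = ∑ p, ∑ ρ, F (insertPoint p m ρ) := by
  rw [← Equiv.sum_comp (Equiv.inv _), sum_perm_eq_sum_insertPoint m]
  refine Finset.sum_congr rfl fun p _ => ?_
  rw [← Equiv.sum_comp (Equiv.inv _)]
  simp [insertPoint_inv]

lemma sum_perm_eq_of_insertPoint_rev_zero {F G : Perm (Fin (n + 1)) → M}
    (h : ∀ v ξ, F (insertPoint 0 v ξ) = G (insertPoint v.rev 0 ξ)) : ∑ ρ, F ρ = ∑ τ, G τ := by
  rw [sum_perm_eq_sum_insertPoint 0, sum_perm_eq_sum_insertPoint_position 0,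
    ← Equiv.sum_comp Fin.revPerm]
  simp only [h, Fin.revPerm_apply, Fin.rev_rev]

/-- The sum of `f` over the children of a node labelled `(a, c)` of the common generating tree. -/
def childSum (f : ℕ → ℕ → M) (a c : ℕ) : M :=
  f (a + 1) c + ∑ m ∈ range (a + 1), f m (c + m)

lemma sum_filter_and_le_comm {α : Type*} [Fintype α] (A : α → Prop) [DecidablePred A]
    (L : α → Fin (n + 1)) (g : ℕ → α → M) :
    ∑ m : Fin (n + 2), ∑ x with A x ∧ (m : ℕ) ≤ L x, g m x =
      ∑ x with A x, ∑ m ∈ range (L x + 1), g m x := by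
  have hrange (a : Fin (n + 1)) : {m ∈ range (n + 2) | m ≤ (a : ℕ)} = range (a + 1) := by
    ext m
    simp only [Finset.mem_filter, Finset.mem_range]
    omega
  simp only [← Finset.filter_filter, Finset.sum_filter (fun x => _ ≤ ((L x : Fin (n + 1)) : ℕ))]
  rw [Finset.sum_comm]
  refine Finset.sum_congr rfl fun x _ => ?_
  rw [Fin.sum_univ_eq_sum_range fun m => if m ≤ (L x : ℕ) then g m x else 0,
    ← Finset.sum_filter, hrange]

open scoped Classical in
lemma sum_avoids_p213_apply_zero_eq (f : ℕ → ℕ → M) :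
    ∑ σ : Perm (Fin (n + 2)) with Avoids σ p213 ∧ σ 0 = 0, f (σ (Fin.last _)) (crs σ) =
      ∑ τ : Perm (Fin (n + 1)) with Avoids τ p213, f (τ (Fin.last n) + 1) (crs τ) := by
  have hlast (τ : Perm (Fin (n + 1))) :
      (insertPoint 0 0 τ (Fin.last (n + 1)) : ℕ) = τ (Fin.last n) + 1 := by
    rw [← Fin.succ_last, ← Fin.succAbove_zero_apply, insertPoint_succAbove,
      Fin.succAbove_zero_apply, Fin.val_succ]
  simp only [and_comm (b := _ = _), ← Finset.filter_filter]
  rw [Finset.sum_filter, sum_perm_apply_eq, Finset.sum_filter]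
  simp only [avoids_p213_insertPoint_zero_zero, crs_insertPoint_zero_zero, hlast]

open scoped Classical in
lemma sum_avoids_p213_apply_zero_ne (f : ℕ → ℕ → M) :
    ∑ σ : Perm (Fin (n + 2)) with Avoids σ p213 ∧ σ 0 ≠ 0, f (σ (Fin.last _)) (crs σ) =
      ∑ τ : Perm (Fin (n + 1)) with Avoids τ p213,
        ∑ m ∈ range (τ (Fin.last n) + 1), f m (crs τ + m) := by
  rw [← sum_filter_and_le_comm, Finset.sum_filter, sum_perm_eq_sum_insertPoint (Fin.last _)]
  refine Finset.sum_congr rfl fun m _ => ?_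
  rw [Finset.sum_filter]
  refine sum_perm_eq_of_insertPoint_rev_zero fun v ξ => ?_
  have hiff := avoids_p213_insertPoint_last_insertPoint_zero_iff m v ξ
  refine ite_congr (propext hiff) (fun h => ?_) fun _ => rfl
  obtain ⟨hav, h0⟩ := hiff.2 h
  rw [crs_insertPoint_last_of_avoids_p213 hav h0, insertPoint_apply_self,
    crsShift_insertPoint_zero ((avoids_p213_insertPoint_rev_zero v ξ).1 h.1).2]

open scoped Classical in
lemma sum_avoids_p213_succ (f : ℕ → ℕ → M) :
    ∑ σ : Perm (Fin (n + 2)) with Avoids σ p213, f (σ (Fin.last _)) (crs σ) =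
      ∑ τ : Perm (Fin (n + 1)) with Avoids τ p213, childSum f (τ (Fin.last n)) (crs τ) := by
  rw [← Finset.sum_filter_add_sum_filter_not _ fun σ => σ 0 = 0]
  simp only [Finset.filter_filter, childSum, Finset.sum_add_distrib,
    sum_avoids_p213_apply_zero_eq, ← ne_eq, sum_avoids_p213_apply_zero_ne]

open scoped Classical in
lemma sum_avoids_p321_penultimate_eq (f : ℕ → ℕ → M) :
    ∑ σ : Perm (Fin (n + 2)) with Avoids σ p321 ∧ σ (Fin.last n).castSucc = Fin.last (n + 1),
        f (σ (Fin.last _)).rev (crs σ) =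
      ∑ τ : Perm (Fin (n + 1)) with Avoids τ p321, f ((τ (Fin.last n)).rev + 1) (crs τ) := by
  have hlast (τ : Perm (Fin (n + 1))) :
      insertPoint (Fin.last n).castSucc (Fin.last (n + 1)) τ (Fin.last (n + 1)) =
        (τ (Fin.last n)).castSucc := by
    have h : (Fin.last n).castSucc.succAbove (Fin.last n) = Fin.last (n + 1) := by simp
    rw [← h, insertPoint_succAbove, h, Fin.succAbove_last]
  simp only [and_comm (b := _ = _), ← Finset.filter_filter]
  rw [Finset.sum_filter, sum_perm_apply_eq, Finset.sum_filter]
  simp only [avoids_p321_insertPoint_penultimate_last, crs_insertPoint_penultimate_last, hlast,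
    Fin.rev_castSucc, Fin.val_succ]

open scoped Classical in
lemma sum_avoids_p321_penultimate_ne (f : ℕ → ℕ → M) :
    ∑ σ : Perm (Fin (n + 2)) with Avoids σ p321 ∧ σ (Fin.last n).castSucc ≠ Fin.last (n + 1),
        f (σ (Fin.last _)).rev (crs σ) =
      ∑ τ : Perm (Fin (n + 1)) with Avoids τ p321,
        ∑ m ∈ range ((τ (Fin.last n)).rev + 1), f m (crs τ + m) := by
  rw [← sum_filter_and_le_comm _ fun τ : Perm (Fin (n + 1)) => (τ (Fin.last n)).rev,
    Finset.sum_filter, sum_perm_eq_sum_insertPoint (Fin.last _), ← Equiv.sum_comp Fin.revPerm]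
  refine Finset.sum_congr rfl fun m _ => ?_
  rw [Finset.sum_filter]
  refine Finset.sum_congr rfl fun τ _ => ?_
  have hrev : (τ (Fin.last n) : ℕ) < m.rev ↔ (m : ℕ) ≤ (τ (Fin.last n)).rev := by
    simp only [Fin.val_rev]
    omega
  rw [Fin.revPerm_apply, insertPoint_apply_self, Fin.rev_rev]
  have hiff := avoids_p321_insertPoint_last_and_ne_iff m.rev τ
  rw [hrev] at hiff
  refine ite_congr (propext hiff) (fun h => ?_) fun _ => rfl
  rw [crs_insertPoint_last_of_avoids_p321 ⟨h.1, hrev.2 h.2⟩, Fin.rev_rev]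

open scoped Classical in
lemma sum_avoids_p321_succ (f : ℕ → ℕ → M) :
    ∑ σ : Perm (Fin (n + 2)) with Avoids σ p321, f (σ (Fin.last _)).rev (crs σ) =
      ∑ τ : Perm (Fin (n + 1)) with Avoids τ p321, childSum f (τ (Fin.last n)).rev (crs τ) := by
  rw [← Finset.sum_filter_add_sum_filter_not _ fun σ => σ (Fin.last n).castSucc = Fin.last (n + 1)]
  simp only [Finset.filter_filter, childSum, Finset.sum_add_distrib,
    sum_avoids_p321_penultimate_eq, ← ne_eq, sum_avoids_p321_penultimate_ne]

open scoped Classical in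
lemma sum_avoids_p213_eq_sum_avoids_p321 (n : ℕ) (f : ℕ → ℕ → M) :
    ∑ σ : Perm (Fin (n + 1)) with Avoids σ p213, f (σ (Fin.last n)) (crs σ) =
      ∑ σ : Perm (Fin (n + 1)) with Avoids σ p321, f (σ (Fin.last n)).rev (crs σ) := by
  induction n generalizing f with
  | zero => simp [avoids_of_lt (show 1 < 3 by decide)]
  | succ n ih => rw [sum_avoids_p213_succ, sum_avoids_p321_succ, ih]

end GeneratingTree

/-! ### The antidiagonal reflection -/

section AntiReflect

variable {n k : ℕ}

/-- The reflection of a permutation matrix in its antidiagonal, which exchanges the patterns 132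
and 213. -/
def antiReflect (σ : Perm (Fin n)) : Perm (Fin n) :=
  Fin.revPerm * σ⁻¹ * Fin.revPerm

lemma antiReflect_rev_apply (σ : Perm (Fin n)) (i : Fin n) :
    antiReflect σ (σ i).rev = i.rev := by
  simp [antiReflect]

lemma antiReflect_involutive : Function.Involutive (antiReflect (n := n)) := fun σ => by
  have hrev : (Fin.revPerm : Perm (Fin n)) * Fin.revPerm = 1 := by
    ext
    simp
  have hinv : (Fin.revPerm : Perm (Fin n))⁻¹ = Fin.revPerm := rfl
  simp only [antiReflect, mul_inv_rev, inv_inv, hinv, ← mul_assoc, hrev, one_mul]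
  rw [mul_assoc, hrev, mul_one]

lemma crs_antiReflect (σ : Perm (Fin n)) : crs (antiReflect σ) = crs σ := by
  let e : Perm (Fin n) := σ.trans Fin.revPerm
  refine (Finset.card_equiv ((Equiv.prodComm _ _).trans (e.prodCongr e)) fun q => ?_).symm
  simp only [e, Finset.mem_filter_univ, Equiv.trans_apply, Equiv.prodComm_apply,
    Equiv.prodCongr_apply, Prod.map, Prod.fst_swap, Prod.snd_swap, Fin.revPerm_apply,
    antiReflect_rev_apply, Fin.val_rev]
  omega

lemma Contains.antiReflect {σ : Perm (Fin n)} {τ : Perm (Fin k)} (h : Contains σ τ) :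
    Contains (antiReflect σ) (antiReflect τ) := by
  obtain ⟨f, hf, hστ⟩ := h
  refine ⟨fun a => (σ (f (τ.symm a.rev))).rev, fun a b hab => ?_, fun a b => ?_⟩
  · simpa [Fin.rev_lt_rev, hστ] using hab
  · obtain ⟨a, rfl⟩ := (τ.trans Fin.revPerm).surjective a
    obtain ⟨b, rfl⟩ := (τ.trans Fin.revPerm).surjective b
    simp only [Equiv.trans_apply, Fin.revPerm_apply, antiReflect_rev_apply, Fin.rev_rev,
      Equiv.symm_apply_apply, Fin.rev_lt_rev, hf.lt_iff_lt]

lemma avoids_antiReflect_iff {σ : Perm (Fin n)} {τ : Perm (Fin k)} :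
    Avoids (antiReflect σ) (antiReflect τ) ↔ Avoids σ τ := by
  refine not_congr ⟨fun h => ?_, Contains.antiReflect⟩
  simpa only [antiReflect_involutive _] using h.antiReflect

end AntiReflect

/-! ### Distributions -/

open scoped Classical in
lemma crsDist_eq_sum (n : ℕ) {k : ℕ} (τ : Perm (Fin k)) :
    crsDist n τ = ∑ σ : Perm (Fin n) with Avoids σ τ, {crs σ} := by
  rw [crsDist, Finset.sum, ← Multiset.sum_map_singleton (Multiset.map _ _), Multiset.map_map]
  rfl

lemma crsDist_antiReflect (n : ℕ) {k : ℕ} (τ : Perm (Fin k)) :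
    crsDist n (antiReflect τ) = crsDist n τ := by
  classical
  simp only [crsDist_eq_sum, Finset.sum_filter]
  rw [← Equiv.sum_comp antiReflect_involutive.toPerm]
  simp only [Function.Involutive.coe_toPerm, crs_antiReflect, avoids_antiReflect_iff]

lemma crsDist_p132_eq_p213 (n : ℕ) : crsDist n p132 = crsDist n p213 := by
  rw [← crsDist_antiReflect, show antiReflect p132 = p213 by decide]

lemma crsDist_p213_eq_p321 (n : ℕ) : crsDist n p213 = crsDist n p321 := by
  classical
  rw [crsDist_eq_sum, crsDist_eq_sum]
  cases n with
  | zero => simp [avoids_of_lt (show 0 < 3 by decide)]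
  | succ n => exact sum_avoids_p213_eq_sum_avoids_p321 n fun _ c => ({c} : Multiset ℕ)

lemma count_one_crsDist_four (τ : Perm (Fin 3)) :
    (crsDist 4 τ).count 1 =
      if τ = p123 then 6 else if τ = p231 then 5 else if τ = p312 then 1 else 4 := by
  simp only [crsDist, avoids_iff]
  revert τ
  decide +kernel

/-- `crs` is equidistributed over `S_n(132)`, `S_n(213)` and `S_n(321)` for every `n`,
and the patterns 123, 231 and 312 form singleton `crs`-Wilf classes among the
patterns of length 3. -/
theorem crs_wilf_classes :
    (∀ n : ℕ, crsDist n p132 = crsDist n p213 ∧ crsDist n p132 = crsDist n p321) ∧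
    (∀ τ ∈ ({p123, p231, p312} : Set (Equiv.Perm (Fin 3))),
      ∀ τ' : Equiv.Perm (Fin 3), τ' ≠ τ → ∃ n : ℕ, crsDist n τ ≠ crsDist n τ') := by
  refine ⟨fun n => ⟨crsDist_p132_eq_p213 n,
    (crsDist_p132_eq_p213 n).trans (crsDist_p213_eq_p321 n)⟩, fun τ hτ τ' hne => ⟨4, fun h => ?_⟩⟩
  have hcount := congrArg (Multiset.count 1) h
  rw [count_one_crsDist_four, count_one_crsDist_four] at hcount
  obtain rfl | rfl | rfl : τ = p123 ∨ τ = p231 ∨ τ = p312 := hτ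
  all_goals grind
end

section
/- For every n ≥ 0, the statistic nes is equidistributed over S_n(132) and S_n(213), and also equidistributed over S_n(231) and S_n(312): Σ_{σ∈S_n(132)} x^{nes(σ)} = Σ_{σ∈S_n(213)} x^{nes(σ)} and Σ_{σ∈S_n(231)} x^{nes(σ)} = Σ_{σ∈S_n(312)} x^{nes(σ)} as polynomials in x. Moreover the patterns 123 and 321 each form singleton nes-Wilf classes among patterns of length 3. -/
open Equiv Finset

open scoped Classical in
/-- The multiset of values of `nes` over the `τ`-avoiding permutations of `Fin n`. -/
noncomputable def nesDist (n : ℕ) {k : ℕ} (τ : Equiv.Perm (Fin k)) : Multiset ℕ :=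
  (Finset.univ.filter (fun σ : Equiv.Perm (Fin n) => Avoids σ τ)).val.map nes

/-!
Among the inversions of `σ` involving the position `x`, the larger values before `x` outnumber the
smaller values after `x` by exactly `x - σ x`. The arcs nested around `x ↦ σ x` are the former if
`x < σ x` and the latter otherwise, so in both cases they are counted by the smaller of the two
numbers, and `nes σ` is the sum over `x` of these minima. Reverse-complement exchanges the two
numbers, so it preserves `nes`; it also exchanges 132 with 213 and 231 with 312.

The formula shows that `nes σ = 0` exactly when `σ` avoids 321, i.e. when every entry is a
left-to-right maximum or a right-to-left minimum. This isolates 321: a decreasing permutation of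
length at least 3 contains 321, hence has nestings, but avoids every pattern that is not decreasing.
It also isolates 123: the entries of either kind form an increasing sequence, so if `2 * k < n` a
permutation of `Fin n` without nestings has an increasing subsequence of length `k + 1`, whereas the
identity has no nestings and avoids every pattern that is not increasing.
-/

section Inversions

variable {n : ℕ}

/-- The positions before `x` that form an inversion of `σ` with `x`; it is empty when `σ x` is a
left-to-right maximum. -/
def largerBefore (σ : Perm (Fin n)) (x : Fin n) : Finset (Fin n) :=
  {i | i < x ∧ σ x < σ i}

/-- The positions after `x` that form an inversion of `σ` with `x`; it is empty when `σ x` is a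
right-to-left minimum. -/
def smallerAfter (σ : Perm (Fin n)) (x : Fin n) : Finset (Fin n) :=
  {j | x < j ∧ σ j < σ x}

@[simp]
theorem mem_largerBefore {σ : Perm (Fin n)} {x i : Fin n} :
    i ∈ largerBefore σ x ↔ i < x ∧ σ x < σ i := by
  simp [largerBefore]

@[simp]
theorem mem_smallerAfter {σ : Perm (Fin n)} {x j : Fin n} :
    j ∈ smallerAfter σ x ↔ x < j ∧ σ j < σ x := by
  simp [smallerAfter]

theorem card_largerBefore_add_apply (σ : Perm (Fin n)) (x : Fin n) :
    #(largerBefore σ x) + σ x = #(smallerAfter σ x) + x := by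
  let before : Finset (Fin n) := Iio x
  let smaller : Finset (Fin n) := {i | σ i < σ x}
  have card_before : #before = x := Fin.card_Iio x
  have card_smaller : #smaller = σ x :=
    (card_equiv σ (by simp [smaller])).trans (Fin.card_Iio (σ x))
  have largerBefore_eq : largerBefore σ x = before \ smaller := by
    ext i
    have : i < x → σ i ≠ σ x := fun h => σ.injective.ne h.ne
    simp only [mem_largerBefore, before, smaller, mem_sdiff, mem_Iio, mem_filter_univ]
    grind
  have smallerAfter_eq : smallerAfter σ x = smaller \ before := by
    ext i
    have : σ i < σ x → i ≠ x := fun h hi => h.ne (congrArg σ hi)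
    simp only [mem_smallerAfter, before, smaller, mem_sdiff, mem_Iio, mem_filter_univ]
    grind
  calc #(largerBefore σ x) + σ x
      = #(before \ smaller) + #smaller := by rw [largerBefore_eq, card_smaller]
    _ = #(smaller \ before) + #before := by
        rw [card_sdiff_add_card, card_sdiff_add_card, union_comm]
    _ = #(smallerAfter σ x) + x := by rw [smallerAfter_eq, card_before]

theorem min_card_largerBefore_card_smallerAfter (σ : Perm (Fin n)) (x : Fin n) :
    min #(largerBefore σ x) #(smallerAfter σ x) =
      if x < σ x then #(largerBefore σ x) else #(smallerAfter σ x) := by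
  have := card_largerBefore_add_apply σ x
  split_ifs with h <;> omega

theorem nes_eq_sum_min (σ : Perm (Fin n)) :
    nes σ = ∑ x, min #(largerBefore σ x) #(smallerAfter σ x) := by
  let upper : Finset (Fin n × Fin n) := {q | q.1 < q.2 ∧ q.2 < σ q.2 ∧ σ q.2 < σ q.1}
  let lower : Finset (Fin n × Fin n) := {q | σ q.2 < σ q.1 ∧ σ q.1 ≤ q.1 ∧ q.1 < q.2}
  have disjoint_upper_lower : Disjoint upper lower := by
    refine disjoint_filter.2 ?_
    rintro ⟨i, j⟩ - ⟨hij, hj, hji⟩ ⟨-, hi, -⟩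
    exact absurd (hij.trans (hj.trans hji)) hi.not_gt
  have card_upper : #upper = ∑ x, if x < σ x then #(largerBefore σ x) else 0 := by
    rw [card_filter, Fintype.sum_prod_type_right]
    refine sum_congr rfl fun x _ => ?_
    by_cases hx : x < σ x <;> simp [hx, largerBefore]
  have card_lower : #lower = ∑ x, if x < σ x then 0 else #(smallerAfter σ x) := by
    rw [card_filter, Fintype.sum_prod_type]
    refine sum_congr rfl fun x _ => ?_
    by_cases hx : x < σ x <;> simp [hx, not_le.2, not_lt.1, smallerAfter, and_comm]
  calc nes σ = #(upper ∪ lower) := congrArg card (filter_or ..)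
    _ = ∑ x, ((if x < σ x then #(largerBefore σ x) else 0) +
          if x < σ x then 0 else #(smallerAfter σ x)) := by
        rw [card_union_of_disjoint disjoint_upper_lower, card_upper, card_lower, sum_add_distrib]
    _ = ∑ x, min #(largerBefore σ x) #(smallerAfter σ x) := by
        refine sum_congr rfl fun x _ => ?_
        rw [min_card_largerBefore_card_smallerAfter]
        split_ifs <;> simp

end Inversions

section ReverseComplement

variable {n k : ℕ}

/-- The reverse-complement `i ↦ n + 1 - σ (n + 1 - i)` of a permutation `σ` of `{1, …, n}`, obtained
here by conjugating with the order reversal of `Fin n`. -/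
def revComp : Perm (Fin n) ≃ Perm (Fin n) :=
  Fin.revPerm.permCongr

@[simp]
theorem revComp_apply (σ : Perm (Fin n)) (i : Fin n) : revComp σ i = (σ i.rev).rev := by
  simp [revComp]

theorem revComp_revComp (σ : Perm (Fin n)) : revComp (revComp σ) = σ := by
  ext i
  simp

theorem card_largerBefore_revComp (σ : Perm (Fin n)) (x : Fin n) :
    #(largerBefore (revComp σ) x) = #(smallerAfter σ x.rev) :=
  card_equiv Fin.revPerm (by simp)

theorem card_smallerAfter_revComp (σ : Perm (Fin n)) (x : Fin n) :
    #(smallerAfter (revComp σ) x) = #(largerBefore σ x.rev) :=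
  card_equiv Fin.revPerm (by simp)

theorem nes_revComp (σ : Perm (Fin n)) : nes (revComp σ) = nes σ := by
  simp only [nes_eq_sum_min, card_largerBefore_revComp, card_smallerAfter_revComp]
  rw [← Equiv.sum_comp Fin.revPerm]
  simp [min_comm]

theorem Contains.revComp {σ : Perm (Fin n)} {τ : Perm (Fin k)} (h : Contains σ τ) :
    Contains (revComp σ) (revComp τ) := by
  obtain ⟨f, hf, hστ⟩ := h
  refine ⟨fun a => (f a.rev).rev, fun a b hab => ?_, fun a b => by simp [hστ]⟩
  exact Fin.rev_lt_rev.2 (hf (Fin.rev_lt_rev.2 hab))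

theorem avoids_revComp_revComp_iff {σ : Perm (Fin n)} {τ : Perm (Fin k)} :
    Avoids (revComp σ) (revComp τ) ↔ Avoids σ τ :=
  not_congr ⟨fun h => by simpa only [revComp_revComp] using h.revComp, Contains.revComp⟩

theorem nesDist_revComp (n : ℕ) (τ : Perm (Fin k)) : nesDist n (revComp τ) = nesDist n τ := by
  classical
  have avoiders_eq : ({σ | Avoids σ (revComp τ)} : Finset (Perm (Fin n))) =
      ({σ | Avoids σ τ} : Finset (Perm (Fin n))).map revComp.toEmbedding := by
    ext σ
    rw [mem_map_equiv, mem_filter_univ, mem_filter_univ, ← avoids_revComp_revComp_iff (τ := τ),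
      Equiv.apply_symm_apply]
  unfold nesDist
  rw [avoiders_eq, map_val, Multiset.map_map]
  exact Multiset.map_congr rfl fun σ _ => nes_revComp σ

end ReverseComplement

section Patterns

variable {n k : ℕ}

theorem contains_p321_iff {σ : Perm (Fin n)} :
    Contains σ p321 ↔ ∃ i j k, i < j ∧ j < k ∧ σ k < σ j ∧ σ j < σ i := by
  constructor
  · rintro ⟨f, hf, hσ⟩
    exact ⟨f 0, f 1, f 2, hf (by decide), hf (by decide), (hσ 2 1).2 (by decide),
      (hσ 1 0).2 (by decide)⟩
  · rintro ⟨i, j, k, hij, hjk, hkj, hji⟩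
    refine ⟨![i, j, k], Fin.strictMono_iff_lt_succ.2 ?_, ?_⟩
    · simp [Fin.forall_fin_two, hij, hjk]
    · simp [Fin.forall_fin_succ, p321, swap_apply_def, hkj, hji, hkj.trans hji, hkj.le, hji.le,
        (hkj.trans hji).le]

theorem contains_one_of_strictMonoOn {σ : Perm (Fin n)} {s : Finset (Fin n)}
    (hσ : StrictMonoOn σ s) (hs : k ≤ #s) : Contains σ (1 : Perm (Fin k)) := by
  let f := s.orderEmbOfCardLe hs
  have hf (a : Fin k) : f a ∈ s := s.orderEmbOfCardLe_mem hs a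
  exact ⟨f, f.strictMono, fun a b => (hσ.lt_iff_lt (hf a) (hf b)).trans f.lt_iff_lt⟩

theorem avoids_one {τ : Perm (Fin k)} (hτ : τ ≠ 1) : Avoids (1 : Perm (Fin n)) τ := by
  rintro ⟨f, hf, hτf⟩
  have strictMono_τ : StrictMono τ := fun a b hab => (hτf a b).1 (hf hab)
  exact hτ (Equiv.coe_fn_injective strictMono_τ.eq_id)

theorem avoids_revPerm {τ : Perm (Fin k)} (hτ : τ ≠ Fin.revPerm) :
    Avoids (Fin.revPerm : Perm (Fin n)) τ := by
  rintro ⟨f, hf, hτf⟩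
  have strictAnti_τ : StrictAnti τ := fun a b hab => (hτf b a).1 (Fin.rev_lt_rev.2 (hf hab))
  have rev_comp_τ : Fin.rev ∘ τ = id := (Fin.rev_strictAnti.comp strictAnti_τ).eq_id
  exact hτ (Equiv.ext fun a => Fin.rev_eq_iff.1 (congrFun rev_comp_τ a))

end Patterns

section Nonnesting

variable {n k : ℕ}

theorem nes_eq_zero_iff {σ : Perm (Fin n)} :
    nes σ = 0 ↔ ∀ x, largerBefore σ x = ∅ ∨ smallerAfter σ x = ∅ := by
  simp [nes_eq_sum_min]

theorem nes_eq_zero_iff_avoids_p321 {σ : Perm (Fin n)} : nes σ = 0 ↔ Avoids σ p321 := by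
  rw [nes_eq_zero_iff, Avoids, contains_p321_iff]
  constructor
  · rintro h ⟨i, j, k, hij, hjk, hkj, hji⟩
    obtain hj | hj := h j
    · exact eq_empty_iff_forall_notMem.1 hj i (mem_largerBefore.2 ⟨hij, hji⟩)
    · exact eq_empty_iff_forall_notMem.1 hj k (mem_smallerAfter.2 ⟨hjk, hkj⟩)
  · intro h j
    by_contra! hj
    obtain ⟨⟨i, hi⟩, ⟨k, hk⟩⟩ := hj
    obtain ⟨hij, hji⟩ := mem_largerBefore.1 hi
    obtain ⟨hjk, hkj⟩ := mem_smallerAfter.1 hk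
    exact h ⟨i, j, k, hij, hjk, hkj, hji⟩

theorem strictMonoOn_largerBefore_eq_empty (σ : Perm (Fin n)) :
    StrictMonoOn σ {x | largerBefore σ x = ∅} := by
  intro i _ j hj hij
  refine (σ.injective.ne hij.ne).lt_of_le (not_lt.1 fun hji => ?_)
  exact eq_empty_iff_forall_notMem.1 hj i (mem_largerBefore.2 ⟨hij, hji⟩)

theorem strictMonoOn_smallerAfter_eq_empty (σ : Perm (Fin n)) :
    StrictMonoOn σ {x | smallerAfter σ x = ∅} := by
  intro i hi j _ hij
  refine (σ.injective.ne hij.ne).lt_of_le (not_lt.1 fun hji => ?_)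
  exact eq_empty_iff_forall_notMem.1 hi j (mem_smallerAfter.2 ⟨hij, hji⟩)

theorem contains_one_of_nes_eq_zero {σ : Perm (Fin n)} (hσ : nes σ = 0) (hn : 2 * k < n) :
    Contains σ (1 : Perm (Fin (k + 1))) := by
  let maxima : Finset (Fin n) := {x | largerBefore σ x = ∅}
  let minima : Finset (Fin n) := {x | smallerAfter σ x = ∅}
  have union_eq : maxima ∪ minima = univ := by
    simpa [maxima, minima, ← filter_or, filter_eq_self] using nes_eq_zero_iff.1 hσ
  have n_le : n ≤ #maxima + #minima := by
    simpa [union_eq] using card_union_le maxima minima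
  obtain hmax | hmin : k + 1 ≤ #maxima ∨ k + 1 ≤ #minima := by omega
  · exact contains_one_of_strictMonoOn
      (by simpa [maxima] using strictMonoOn_largerBefore_eq_empty σ) hmax
  · exact contains_one_of_strictMonoOn
      (by simpa [minima] using strictMonoOn_smallerAfter_eq_empty σ) hmin

theorem nes_one (n : ℕ) : nes (1 : Perm (Fin n)) = 0 :=
  nes_eq_zero_iff_avoids_p321.2 (avoids_one (by decide))

theorem nes_revPerm_ne_zero (hn : 3 ≤ n) : nes (Fin.revPerm : Perm (Fin n)) ≠ 0 := by
  rw [Ne, nes_eq_zero_iff_avoids_p321, Avoids, not_not, contains_p321_iff]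
  exact ⟨⟨0, by omega⟩, ⟨1, by omega⟩, ⟨2, by omega⟩, by simp⟩

end Nonnesting

section WilfClasses

variable {n k : ℕ}

theorem mem_nesDist {τ : Perm (Fin k)} {m : ℕ} :
    m ∈ nesDist n τ ↔ ∃ σ : Perm (Fin n), Avoids σ τ ∧ nes σ = m := by
  simp [nesDist]

theorem nesDist_one_ne (hn : 2 * k < n) {l : ℕ} {τ : Perm (Fin l)} (hτ : τ ≠ 1) :
    nesDist n (1 : Perm (Fin (k + 1))) ≠ nesDist n τ := by
  intro h
  have zero_mem : 0 ∈ nesDist n τ := mem_nesDist.2 ⟨1, avoids_one hτ, nes_one n⟩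
  obtain ⟨σ, hσ, nes_σ⟩ := mem_nesDist.1 (h ▸ zero_mem)
  exact hσ (contains_one_of_nes_eq_zero nes_σ hn)

theorem nesDist_p321_ne (hn : 3 ≤ n) {τ : Perm (Fin k)} (hτ : τ ≠ Fin.revPerm) :
    nesDist n p321 ≠ nesDist n τ := by
  intro h
  have nes_mem : nes Fin.revPerm ∈ nesDist n τ := mem_nesDist.2 ⟨_, avoids_revPerm hτ, rfl⟩
  obtain ⟨σ, hσ, nes_σ⟩ := mem_nesDist.1 (h ▸ nes_mem)
  exact nes_revPerm_ne_zero hn (nes_σ ▸ nes_eq_zero_iff_avoids_p321.2 hσ)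

end WilfClasses

/-- `nes` is equidistributed over `S_n(132)` and `S_n(213)`, and over `S_n(231)` and
`S_n(312)`, for every `n`; and the patterns 123 and 321 form singleton `nes`-Wilf
classes among the patterns of length 3. -/
theorem nes_wilf_classes :
    (∀ n : ℕ, nesDist n p132 = nesDist n p213 ∧ nesDist n p231 = nesDist n p312) ∧
    (∀ τ ∈ ({p123, p321} : Set (Equiv.Perm (Fin 3))),
      ∀ τ' : Equiv.Perm (Fin 3), τ' ≠ τ → ∃ n : ℕ, nesDist n τ ≠ nesDist n τ') := by
  have p213_eq : p213 = revComp p132 := by decide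
  have p312_eq : p312 = revComp p231 := by decide
  have p321_eq : p321 = Fin.revPerm := by decide
  refine ⟨fun n => ⟨?_, ?_⟩, ?_⟩
  · rw [p213_eq, nesDist_revComp]
  · rw [p312_eq, nesDist_revComp]
  · rintro τ (rfl | rfl) τ' hτ'
    · exact ⟨5, nesDist_one_ne (by norm_num) hτ'⟩
    · exact ⟨3, nesDist_p321_ne le_rfl (p321_eq ▸ hτ')⟩
end

section
/- For every n ≥ 0, the joint distribution of the pair of statistics (crs, nes) over S_n(132) equals that over S_n(213): the multisets {(crs(σ), nes(σ)) : σ ∈ S_n(132)} and {(crs(σ), nes(σ)) : σ ∈ S_n(213)} are equal. -/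
open Equiv Finset

/-! Draw a permutation as the arcs `i → σ i`. The map `σ ↦ rc(σ⁻¹)` reverses every arc and then
reflects the line, turning `i → σ i` into `(σ i).rev → i.rev`. The two changes of direction cancel:
upper arcs stay upper arcs, and the weak inequality for lower arcs remains where it was, although
neither the inverse nor the reverse-complement alone respects it. Crossing pairs of arcs therefore
stay crossing, nesting pairs stay nesting, and pattern containment is carried along, with `132`
going to `213`. -/

/-- The reverse-complement of the inverse of a permutation: the symmetry that matches the two
avoidance classes. Both the reversal and the complement are multiplication by `Fin.revPerm`. -/
def revCompInv {n : ℕ} (σ : Perm (Fin n)) : Perm (Fin n) :=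
  Fin.revPerm * σ⁻¹ * Fin.revPerm

section

variable {n k : ℕ}

lemma revCompInv_apply (σ : Perm (Fin n)) (i : Fin n) :
    revCompInv σ i = (σ.symm i.rev).rev := rfl

lemma revCompInv_rev_apply (σ : Perm (Fin n)) (i : Fin n) :
    revCompInv σ (σ i).rev = i.rev := by
  rw [revCompInv_apply, Fin.rev_rev, symm_apply_apply]

lemma revCompInv_involutive : Function.Involutive (revCompInv (n := n)) := by
  intro σ
  ext i
  have symm_rev : (revCompInv σ).symm i.rev = (σ i).rev := by
    rw [symm_apply_eq, revCompInv_rev_apply]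
  rw [revCompInv_apply, symm_rev, Fin.rev_rev]

lemma revCompInv_p132 : revCompInv p132 = p213 := by decide

section

variable {σ : Perm (Fin n)} {τ : Perm (Fin k)}

lemma Contains.revCompInv (h : Contains σ τ) : Contains (revCompInv σ) (revCompInv τ) := by
  obtain ⟨f, f_mono, f_iso⟩ := h
  -- Positions of the new occurrence are the reflected values of the old one, read from the top.
  refine ⟨fun a => (σ (f (τ.symm a.rev))).rev, fun a b hab => ?_, fun a b => ?_⟩
  · rw [Fin.rev_lt_rev, f_iso, apply_symm_apply, apply_symm_apply]
    exact Fin.rev_lt_rev.mpr hab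
  · simp only [revCompInv_rev_apply]
    rw [Fin.rev_lt_rev, f_mono.lt_iff_lt, revCompInv_apply, revCompInv_apply, Fin.rev_lt_rev]

lemma contains_revCompInv_iff :
    Contains (revCompInv σ) (revCompInv τ) ↔ Contains σ τ :=
  ⟨fun h => by simpa only [revCompInv_involutive _] using h.revCompInv, Contains.revCompInv⟩

lemma avoids_revCompInv_iff : Avoids (revCompInv σ) (revCompInv τ) ↔ Avoids σ τ :=
  not_congr contains_revCompInv_iff

end

open scoped Classical in
lemma filter_avoids_revCompInv (n : ℕ) (τ : Perm (Fin k)) :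
    univ.filter (fun σ : Perm (Fin n) => Avoids σ (revCompInv τ)) =
      (univ.filter fun σ : Perm (Fin n) => Avoids σ τ).map
        (revCompInv_involutive.toPerm revCompInv).toEmbedding := by
  ext σ
  rw [mem_map_equiv, Function.Involutive.toPerm_symm, Function.Involutive.coe_toPerm,
    mem_filter_univ, mem_filter_univ, ← avoids_revCompInv_iff (τ := τ), revCompInv_involutive σ]

lemma crs_revCompInv (σ : Perm (Fin n)) : crs (revCompInv σ) = crs σ := by
  let reflect : Perm (Fin n) := σ.trans Fin.revPerm
  -- Crossing arcs have `i < j` and `σ i < σ j`, so their images start in the opposite order.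
  refine (card_equiv ((prodComm _ _).trans (reflect.prodCongr reflect)) fun ⟨i, j⟩ => ?_).symm
  change _ ↔ ((σ j).rev, (σ i).rev) ∈ _
  simp only [mem_filter_univ, revCompInv_rev_apply, Fin.val_rev]
  omega

lemma nes_revCompInv (σ : Perm (Fin n)) : nes (revCompInv σ) = nes σ := by
  let reflect : Perm (Fin n) := σ.trans Fin.revPerm
  refine (card_equiv (reflect.prodCongr reflect) fun ⟨i, j⟩ => ?_).symm
  change _ ↔ ((σ i).rev, (σ j).rev) ∈ _
  simp only [mem_filter_univ, revCompInv_rev_apply, Fin.val_rev]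
  omega

end

open scoped Classical in
theorem crs_nes_joint_132_213_general {k : ℕ} (τ : Perm (Fin k)) (n : ℕ) :
    (univ.filter fun σ : Perm (Fin n) => Avoids σ τ).val.map (fun σ => (crs σ, nes σ)) =
      (univ.filter fun σ : Perm (Fin n) => Avoids σ (revCompInv τ)).val.map
        (fun σ => (crs σ, nes σ)) := by
  rw [filter_avoids_revCompInv, map_val, Multiset.map_map]
  refine Multiset.map_congr rfl fun σ _ => ?_
  exact (Prod.ext (crs_revCompInv σ) (nes_revCompInv σ)).symm

open scoped Classical in
/-- The joint distribution of `(crs, nes)` over `S_n(132)` equals that over `S_n(213)`. -/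
theorem crs_nes_joint_132_213 (n : ℕ) :
    ((Finset.univ.filter (fun σ : Equiv.Perm (Fin n) => Avoids σ p132)).val.map
        (fun σ => (crs σ, nes σ)))
      = ((Finset.univ.filter (fun σ : Equiv.Perm (Fin n) => Avoids σ p213)).val.map
        (fun σ => (crs σ, nes σ))) := by
  rw [← revCompInv_p132]
  exact crs_nes_joint_132_213_general p132 n
end

section
/- For every n ≥ 0, the joint distribution of the triple of statistics (fp, inv, nes) over S_n(231) equals that over S_n(312): the multisets {(fp(σ), inv(σ), nes(σ)) : σ ∈ S_n(231)} and {(fp(σ), inv(σ), nes(σ)) : σ ∈ S_n(312)} are equal. -/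
open Equiv Finset

/-!
The map `σ ↦ σ⁻¹` reflects the arc diagram of a permutation, turning the arc `i → σ i` into
`σ i → i`. It maps `S_n(τ)` onto `S_n(τ⁻¹)`, the patterns `231` and `312` are inverse to each other,
and `fp` and `inv` are visibly preserved. For `nes` there is an asymmetry: a fixed point nests under
lower arcs but not under upper ones. The reflection exchanges nestings of two upper arcs with those
of two lower arcs, and a fixed point `i` lies under equally many lower and upper arcs, because `σ`
moves as many points out of `{j | j < i}` as into it.
-/

section PairCounts

variable {α : Type*} [Fintype α]

theorem card_filter_apply_mem_and_notMem [DecidableEq α] (σ : Perm α) (s : Finset α) :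
    #{j | σ j ∈ s ∧ j ∉ s} = #{j | j ∈ s ∧ σ j ∉ s} := by
  have hcard : #(s.map σ.symm.toEmbedding) = #s := card_map _
  convert card_sdiff_comm hcard using 2 <;> ext j <;> simp

variable [LinearOrder α]

/-- The number of nestings `i < j < σ j < σ i` of two upper arcs, that is, of two excedances. -/
def upperNes (σ : Perm α) : ℕ :=
  #{q : α × α | q.1 < q.2 ∧ q.2 < σ q.2 ∧ σ q.2 < σ q.1}

/-- The number of nestings `σ j < σ i < i < j` of two lower arcs, that is, of two
anti-excedances. -/
def lowerNes (σ : Perm α) : ℕ :=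
  #{q : α × α | σ q.2 < σ q.1 ∧ σ q.1 < q.1 ∧ q.1 < q.2}

/-- The number of nestings `σ j < σ i = i < j` of a fixed point under a lower arc. -/
def fixedNes (σ : Perm α) : ℕ :=
  #{q : α × α | σ q.2 < q.1 ∧ σ q.1 = q.1 ∧ q.1 < q.2}

theorem upperNes_inv (σ : Perm α) : upperNes σ⁻¹ = lowerNes σ :=
  card_equiv ((prodComm α α).trans (prodCongr σ⁻¹ σ⁻¹)) (by simp)

theorem lowerNes_inv (σ : Perm α) : lowerNes σ⁻¹ = upperNes σ := by
  rw [← upperNes_inv, inv_inv]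

theorem fixedNes_eq_sum (σ : Perm α) :
    fixedNes σ = ∑ i with σ i = i, #{j | σ j < i ∧ i < j} := by
  simp only [fixedNes, card_filter, Fintype.sum_prod_type, sum_filter]
  refine sum_congr rfl fun i _ => ?_
  split_ifs with hi <;> simp [hi]

theorem card_lower_arcs_over_eq_card_upper_arcs_over {σ : Perm α} {i : α} (hi : σ i = i) :
    #{j | σ j < i ∧ i < j} = #{j | j < i ∧ i < σ j} := by
  have apply_ne {j : α} (hj : j ≠ i) : σ j ≠ i := fun h => hj (σ.injective (h.trans hi.symm))
  convert card_filter_apply_mem_and_notMem σ {j | j < i} using 2 <;> ext j <;>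
    simp only [mem_filter_univ, not_lt] <;> grind

theorem fixedNes_inv (σ : Perm α) : fixedNes σ⁻¹ = fixedNes σ := by
  rw [fixedNes_eq_sum, fixedNes_eq_sum]
  refine sum_congr (by ext i; simp [symm_apply_eq, eq_comm (a := i)]) fun i hi => ?_
  calc #{j | σ⁻¹ j < i ∧ i < j}
      = #{j | j < i ∧ i < σ j} := card_equiv σ⁻¹ (by simp)
    _ = #{j | σ j < i ∧ i < j} :=
      (card_lower_arcs_over_eq_card_upper_arcs_over (by simpa using hi)).symm

end PairCounts

section Statistics

variable {n : ℕ}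

theorem fp_inv (σ : Perm (Fin n)) : fp σ⁻¹ = fp σ :=
  card_equiv σ⁻¹ (by simp [eq_comm])

theorem invStat_inv (σ : Perm (Fin n)) : invStat σ⁻¹ = invStat σ :=
  card_equiv ((prodComm _ _).trans (prodCongr σ⁻¹ σ⁻¹)) (by simp [and_comm])

theorem nes_eq_upperNes_add_lowerNes_add_fixedNes (σ : Perm (Fin n)) :
    nes σ = upperNes σ + lowerNes σ + fixedNes σ := by
  simp only [nes, upperNes, lowerNes, fixedNes, card_filter, ← sum_add_distrib]
  refine sum_congr rfl fun q _ => ?_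
  simp only [Fin.lt_def, Fin.ext_iff]
  split_ifs <;> omega

theorem nes_inv (σ : Perm (Fin n)) : nes σ⁻¹ = nes σ := by
  simp only [nes_eq_upperNes_add_lowerNes_add_fixedNes, upperNes_inv, lowerNes_inv, fixedNes_inv,
    add_comm (lowerNes σ)]

end Statistics

section Avoidance

variable {n k : ℕ} {σ : Perm (Fin n)} {τ : Perm (Fin k)}

theorem Contains.inv (h : Contains σ τ) : Contains σ⁻¹ τ⁻¹ := by
  obtain ⟨f, hf, hστ⟩ := h
  refine ⟨fun a => σ (f (τ⁻¹ a)), fun a b hab => ?_, fun a b => ?_⟩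
  · simpa [hστ] using hab
  · simp [hf.lt_iff_lt]

theorem avoids_inv_iff : Avoids σ⁻¹ τ ↔ Avoids σ τ⁻¹ :=
  not_congr ⟨fun h => by simpa using h.inv, fun h => by simpa using h.inv⟩

open scoped Classical in
theorem map_avoids_eq_map_avoids_inv {β : Type*} {f : Perm (Fin n) → β}
    (hf : ∀ σ, f σ⁻¹ = f σ) (τ : Perm (Fin k)) :
    ({σ | Avoids σ τ} : Finset (Perm (Fin n))).val.map f =
      ({σ | Avoids σ τ⁻¹} : Finset (Perm (Fin n))).val.map f := by
  have inv_avoiders : ({σ | Avoids σ τ⁻¹} : Finset (Perm (Fin n))) =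
      ({σ | Avoids σ τ} : Finset (Perm (Fin n))).map (Equiv.inv _).toEmbedding := by
    ext σ
    simp [mem_map_equiv, avoids_inv_iff]
  rw [inv_avoiders, map_val, Multiset.map_map]
  exact Multiset.map_congr rfl fun σ _ => (hf σ).symm

theorem p231_inv : p231⁻¹ = p312 := by decide

end Avoidance

open scoped Classical in
theorem fp_inv_nes_joint_231_312_general (n : ℕ) {k : ℕ} (τ : Perm (Fin k)) :
    ((Finset.univ.filter (fun σ : Perm (Fin n) => Avoids σ τ)).val.map
        (fun σ => (fp σ, invStat σ, nes σ)))
      = ((Finset.univ.filter (fun σ : Perm (Fin n) => Avoids σ τ⁻¹)).val.map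
        (fun σ => (fp σ, invStat σ, nes σ))) :=
  map_avoids_eq_map_avoids_inv (fun σ => by simp only [fp_inv, invStat_inv, nes_inv]) τ

open scoped Classical in
/-- The joint distribution of `(fp, inv, nes)` over `S_n(231)` equals that over `S_n(312)`. -/
theorem fp_inv_nes_joint_231_312 (n : ℕ) :
    ((Finset.univ.filter (fun σ : Equiv.Perm (Fin n) => Avoids σ p231)).val.map
        (fun σ => (fp σ, invStat σ, nes σ)))
      = ((Finset.univ.filter (fun σ : Equiv.Perm (Fin n) => Avoids σ p312)).val.map
        (fun σ => (fp σ, invStat σ, nes σ))) := by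
  rw [← p231_inv]
  exact fp_inv_nes_joint_231_312_general n p231
end

section
/- The reverse-complement map preserves the number of nestings: for every permutation σ of [n], nes(rc(σ)) = nes(σ). -/
open Equiv Finset

/-- The reverse-complement of a permutation: `rc σ (i) = n+1-σ(n+1-i)`
(in 0-indexed form, `rc σ (i) = rev (σ (rev i))`). -/
def rc {n : ℕ} (σ : Equiv.Perm (Fin n)) : Equiv.Perm (Fin n) :=
  (Fin.revPerm.trans σ).trans Fin.revPerm

/-! Reversing the order exchanges the upper nestings `i < j < σ j < σ i` with the strict lower
nestings `σ j < σ i < i < j`. What remains is the asymmetric case `σ i = i` of the definition: fixed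
points under a lower arc are counted, and reversal turns them into fixed points under an upper arc.
These are equinumerous, because a bijection carries as many points from below a fixed point `k` to
above it as the other way. -/

section SelfMap

open Function

variable {α β : Type*} [Fintype α] [Fintype β]

theorem card_filter_fst_and_eq_sum (p : α → Prop) [DecidablePred p] (r : α → β → Prop)
    [∀ a, DecidablePred (r a)] :
    #{q : α × β | p q.1 ∧ r q.1 q.2} = ∑ a with p a, #{b | r a b} := by
  rw [← card_sigma]
  exact card_equiv (Equiv.sigmaEquivProd α β).symm (by simp)

theorem card_filter_and_not_comp_of_injective {f : α → α} (hf : Injective f) (p : α → Prop)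
    [DecidablePred p] :
    #{i | p i ∧ ¬p (f i)} = #{i | ¬p i ∧ p (f i)} := by
  classical
  have hcard : #{i | p i} = #{i | p (f i)} :=
    (card_bijective f (Finite.injective_iff_bijective.mp hf) (by simp)).symm
  simpa only [filter_and_not, and_comm] using card_sdiff_comm hcard

variable [LinearOrder α] [LinearOrder β]

theorem card_lt_lt_map_eq_card_map_lt_lt {f : α → α} (hf : Injective f) {k : α} (hk : f k = k) :
    #{i | i < k ∧ k < f i} = #{j | f j < k ∧ k < j} := by
  have hne (i : α) : f i = k ↔ i = k := by rw [← hf.eq_iff (a := i), hk]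
  convert card_filter_and_not_comp_of_injective hf (· < k) using 3 <;> grind

/-- The nestings of a self-map of a linear order, as a set of pairs; `nes` counts them when the
order is `Fin n`. -/
def nestings (f : α → α) : Finset (α × α) :=
  {q | (q.1 < q.2 ∧ q.2 < f q.2 ∧ f q.2 < f q.1) ∨ (f q.2 < f q.1 ∧ f q.1 ≤ q.1 ∧ q.1 < q.2)}

/-- Nestings of two arcs `i ↦ f i` drawn above the line, that is, with `i < f i`. -/
def upperNestings (f : α → α) : Finset (α × α) :=
  {q | q.1 < q.2 ∧ q.2 < f q.2 ∧ f q.2 < f q.1}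

/-- Nestings of two arcs `i ↦ f i` drawn below the line, that is, with `f i < i`; unlike in
`nestings`, fixed points do not count as lower arcs. -/
def lowerNestings (f : α → α) : Finset (α × α) :=
  {q | f q.2 < f q.1 ∧ f q.1 < q.1 ∧ q.1 < q.2}

/-- Pairs `(k, i)` of a fixed point `k` and an upper arc `i ↦ f i` passing over it. -/
def upperFixedNestings (f : α → α) : Finset (α × α) :=
  {q | f q.1 = q.1 ∧ q.2 < q.1 ∧ q.1 < f q.2}

/-- Pairs `(k, j)` of a fixed point `k` and a lower arc `j ↦ f j` passing under it. -/
def lowerFixedNestings (f : α → α) : Finset (α × α) :=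
  {q | f q.1 = q.1 ∧ f q.2 < q.1 ∧ q.1 < q.2}

theorem card_nestings (f : α → α) :
    #(nestings f) = #(upperNestings f) + #(lowerNestings f) + #(lowerFixedNestings f) := by
  have hdisj : Disjoint (upperNestings f) (lowerNestings f) := by
    simp only [disjoint_left, upperNestings, lowerNestings, mem_filter_univ]
    grind
  have hdisj_fixed : Disjoint (upperNestings f ∪ lowerNestings f) (lowerFixedNestings f) := by
    simp only [disjoint_left, upperNestings, lowerNestings, lowerFixedNestings, mem_union,
      mem_filter_univ]
    grind
  rw [← card_union_of_disjoint hdisj, ← card_union_of_disjoint hdisj_fixed]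
  congr 1
  ext q
  simp only [nestings, upperNestings, lowerNestings, lowerFixedNestings, mem_union,
    mem_filter_univ]
  grind

theorem card_upperFixedNestings_eq_card_lowerFixedNestings {f : α → α} (hf : Injective f) :
    #(upperFixedNestings f) = #(lowerFixedNestings f) := by
  have hfixed (k : α) (hk : k ∈ ({k | f k = k} : Finset α)) :
      #{i | i < k ∧ k < f i} = #{j | f j < k ∧ k < j} :=
    card_lt_lt_map_eq_card_map_lt_lt hf (by simpa using hk)
  calc #(upperFixedNestings f)
    _ = ∑ k with f k = k, #{i | i < k ∧ k < f i} :=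
      card_filter_fst_and_eq_sum (fun k => f k = k) fun k i => i < k ∧ k < f i
    _ = ∑ k with f k = k, #{j | f j < k ∧ k < j} := sum_congr rfl hfixed
    _ = #(lowerFixedNestings f) :=
      (card_filter_fst_and_eq_sum (fun k => f k = k) fun k j => f j < k ∧ k < j).symm

variable {e : α ≃ β} {f : α → α} {g : β → β}

theorem card_lowerNestings_eq_card_upperNestings_of_semiconj (he : StrictAnti e)
    (h : Semiconj e f g) : #(lowerNestings f) = #(upperNestings g) := by
  refine card_equiv ((Equiv.prodComm α α).trans (e.prodCongr e)) fun q => ?_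
  simp [lowerNestings, upperNestings, ← h.eq, he.lt_iff_gt, and_comm, and_assoc]

theorem card_upperFixedNestings_eq_card_lowerFixedNestings_of_semiconj (he : StrictAnti e)
    (h : Semiconj e f g) : #(upperFixedNestings f) = #(lowerFixedNestings g) := by
  refine card_equiv (e.prodCongr e) fun q => ?_
  simp [upperFixedNestings, lowerFixedNestings, ← h.eq, he.lt_iff_gt, and_comm]

theorem nes_rc_general (hf : Injective f) (he : StrictAnti e) (h : Semiconj e f g) :
    #(nestings g) = #(nestings f) := by
  have he_symm : StrictAnti e.symm := fun a b hab => he.lt_iff_gt.mp (by simpa using hab)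
  have h_symm : Semiconj e.symm g f := h.inverse_left e.left_inv e.right_inv
  calc #(nestings g)
    _ = #(upperNestings g) + #(lowerNestings g) + #(lowerFixedNestings g) := card_nestings g
    _ = #(lowerNestings f) + #(upperNestings f) + #(upperFixedNestings f) := by
      rw [card_lowerNestings_eq_card_upperNestings_of_semiconj he h,
        card_lowerNestings_eq_card_upperNestings_of_semiconj he_symm h_symm,
        card_upperFixedNestings_eq_card_lowerFixedNestings_of_semiconj he h]
    _ = #(upperNestings f) + #(lowerNestings f) + #(lowerFixedNestings f) := by
      rw [card_upperFixedNestings_eq_card_lowerFixedNestings hf, add_comm #(lowerNestings f)]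
    _ = #(nestings f) := (card_nestings f).symm

end SelfMap

theorem nes_eq_card_nestings {n : ℕ} (σ : Equiv.Perm (Fin n)) : nes σ = #(nestings σ) :=
  rfl

theorem semiconj_rev_rc {n : ℕ} (σ : Equiv.Perm (Fin n)) :
    Function.Semiconj Fin.revPerm σ (rc σ) := fun i => by simp [rc]

/-- The reverse-complement map preserves the number of nestings. -/
theorem nes_rc {n : ℕ} (σ : Equiv.Perm (Fin n)) : nes (rc σ) = nes σ := by
  rw [nes_eq_card_nestings, nes_eq_card_nestings]
  exact nes_rc_general σ.injective Fin.rev_strictAnti (semiconj_rev_rc σ)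
end

section
/- The reverse-complement-inverse map preserves both the number of crossings and the number of nestings: for every permutation σ of [n], crs(rci(σ)) = crs(σ) and nes(rci(σ)) = nes(σ). -/
open Equiv Finset

/-- The reverse-complement-inverse of a permutation:
`rci σ (j) = n+1-σ⁻¹(n+1-j)` (in 0-indexed form, `rci σ (j) = rev (σ⁻¹ (rev j))`). -/
def rci {n : ℕ} (σ : Equiv.Perm (Fin n)) : Equiv.Perm (Fin n) :=
  (Fin.revPerm.trans σ⁻¹).trans Fin.revPerm

/-!
Draw `σ` as the set of arcs `i → σ i`. The map `rci` replaces the arc `i → σ i` by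
`rev (σ i) → rev i`: it swaps the two ends of every arc and reverses the order of the line. The two
operations together leave an upper arc (`i < σ i`) upper and a lower one lower, so they respect the
strict inequality for upper arcs and the weak one for lower arcs. A crossing of `p` and `q` thus
becomes a crossing of the images of `q` and `p`, and a nesting of `p` and `q` becomes a nesting of
the images of `p` and `q`.
-/

section Arcs

variable {α β : Type*}

/-- The arc `i → σ i` of a permutation, encoded by its source and its target. -/
def arc (σ : Perm α) (i : α) : α × α :=
  (i, σ i)

/-- The crossing relation on arcs `p.1 → p.2` and `q.1 → q.2`. It is not symmetric: `p` is the arc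
whose source is further to the left. -/
def ArcCrosses [Preorder α] (p q : α × α) : Prop :=
  (p.1 < q.1 ∧ q.1 < p.2 ∧ p.2 < q.2) ∨ (p.2 < q.2 ∧ q.2 ≤ p.1 ∧ p.1 < q.1)

/-- The nesting relation on arcs `p.1 → p.2` and `q.1 → q.2`. It is not symmetric: `p` is the arc
whose source is further to the left. -/
def ArcNests [Preorder α] (p q : α × α) : Prop :=
  (p.1 < q.1 ∧ q.1 < q.2 ∧ q.2 < p.2) ∨ (q.2 < p.2 ∧ p.2 ≤ p.1 ∧ p.1 < q.1)

instance [Preorder α] [DecidableLT α] [DecidableLE α] : DecidableRel (ArcCrosses (α := α)) :=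
  fun _ _ => inferInstanceAs (Decidable (_ ∨ _))

instance [Preorder α] [DecidableLT α] [DecidableLE α] : DecidableRel (ArcNests (α := α)) :=
  fun _ _ => inferInstanceAs (Decidable (_ ∨ _))

variable [LinearOrder α] [Preorder β] {f : α → β} {p q : α × α}

theorem arcCrosses_map_swap_iff (hf : StrictAnti f) :
    ArcCrosses (q.swap.map f f) (p.swap.map f f) ↔ ArcCrosses p q := by
  simp only [ArcCrosses, Prod.map_fst, Prod.map_snd, Prod.fst_swap, Prod.snd_swap,
    hf.lt_iff_gt, hf.le_iff_ge]
  tauto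

theorem arcNests_map_swap_iff (hf : StrictAnti f) :
    ArcNests (p.swap.map f f) (q.swap.map f f) ↔ ArcNests p q := by
  simp only [ArcNests, Prod.map_fst, Prod.map_snd, Prod.fst_swap, Prod.snd_swap,
    hf.lt_iff_gt, hf.le_iff_ge]
  tauto

end Arcs

section Rci

variable {n : ℕ} (σ : Perm (Fin n))

theorem crs_eq_card_arcCrosses :
    crs σ = #{q : Fin n × Fin n | ArcCrosses (arc σ q.1) (arc σ q.2)} :=
  rfl

theorem nes_eq_card_arcNests :
    nes σ = #{q : Fin n × Fin n | ArcNests (arc σ q.1) (arc σ q.2)} :=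
  rfl

theorem arc_rci_rev_apply (i : Fin n) :
    arc (rci σ) (σ i).rev = (arc σ i).swap.map Fin.rev Fin.rev := by
  simp [arc, rci]

theorem crs_rci : crs (rci σ) = crs σ := by
  let e : Perm (Fin n) := σ.trans Fin.revPerm
  rw [crs_eq_card_arcCrosses, crs_eq_card_arcCrosses]
  refine (card_equiv ((prodComm _ _).trans (e.prodCongr e)) fun q => ?_).symm
  simp only [e, mem_filter_univ, trans_apply, prodComm_apply, prodCongr_apply, Prod.map_fst,
    Prod.map_snd, Prod.fst_swap, Prod.snd_swap, Fin.revPerm_apply, arc_rci_rev_apply,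
    arcCrosses_map_swap_iff Fin.rev_strictAnti]

theorem nes_rci : nes (rci σ) = nes σ := by
  let e : Perm (Fin n) := σ.trans Fin.revPerm
  rw [nes_eq_card_arcNests, nes_eq_card_arcNests]
  refine (card_equiv (e.prodCongr e) fun q => ?_).symm
  simp only [e, mem_filter_univ, trans_apply, prodCongr_apply, Prod.map_fst, Prod.map_snd,
    Fin.revPerm_apply, arc_rci_rev_apply, arcNests_map_swap_iff Fin.rev_strictAnti]

end Rci

/-- The reverse-complement-inverse map preserves the numbers of crossings and nestings. -/
theorem crs_nes_rci {n : ℕ} (σ : Equiv.Perm (Fin n)) :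
    crs (rci σ) = crs σ ∧ nes (rci σ) = nes σ :=
  ⟨crs_rci σ, nes_rci σ⟩
end
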